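/- arXiv:1608.03499 — 2 statements merged into one kernel-verified Lean document; each statement's English description precedes it below -/
import Mathlib

section
/- The V_n-graded Hilbert function of the ideal generated by p_n in k[x]/J_n takes only the values 0 and 1: for every b ∈ ℕ^n, any two V_n-homogeneous polynomials of V_n-degree b lying in J_n + ⟨p_n⟩ are k-linearly dependent modulo J_n (equivalently, every V_n-homogeneous element of J_n + ⟨p_n⟩ is congruent modulo J_n to a scalar multiple of a monomial times p_n). The same statement holds with p_n replaced by p^+_{n,i} for any i ∈ [n]. -/
open scoped BigOperators

namespace Veronese

open MvPolynomial

/-- `c m = C(m,2)`. -/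
def c (m : ℕ) : ℕ := m.choose 2

variable (n : ℕ)

/-- multiplicity (as ℤ) of the index `i` in the unordered pair `s`. -/
def wt (s : Sym2 (Fin n)) : Fin n → ℤ :=
  Sym2.lift ⟨fun a b i => (if i = a then 1 else 0) + (if i = b then 1 else 0),
    fun a b => funext fun i => add_comm _ _⟩ s

/-- The Veronese grading map `V_n : ℤ^P → ℤ^n`, sending `e_{ij} ↦ e_i + e_j`. -/
def Vmap : (Sym2 (Fin n) → ℤ) →ₗ[ℤ] (Fin n → ℤ) where
  toFun u := fun i => ∑ s : Sym2 (Fin n), u s * wt n s i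
  map_add' u v := funext fun i => by
    simp [add_mul, Finset.sum_add_distrib]
  map_smul' m u := funext fun i => by
    simp [Finset.mul_sum, smul_eq_mul, mul_assoc]

/-- The Veronese lattice `L_n = ker V_n`. -/
def Llat : Submodule ℤ (Sym2 (Fin n) → ℤ) := LinearMap.ker (Vmap n)

/-- standard basis vector `e_{ij}` of `ℤ^P`. -/
def e (i j : Fin n) : Sym2 (Fin n) → ℤ := Pi.single s(i, j) 1

lemma e_comm (i j : Fin n) : e n i j = e n j i := by
  unfold e; rw [Sym2.eq_swap]

/-- `[ij|ij] = e_{ii} + e_{jj} - 2 e_{ij}`. -/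
def minorVec (i j : Fin n) : Sym2 (Fin n) → ℤ := e n i i + e n j j - 2 • e n i j

/-- The principal minor lattice `L'_n`. -/
def L'lat : Submodule ℤ (Sym2 (Fin n) → ℤ) :=
  Submodule.span ℤ {v | ∃ i j : Fin n, i < j ∧ v = minorVec n i j}

/-- the last index `n` (zero-based: `n-1`) of `Fin n`. -/
def lastIdx (hn : 0 < n) : Fin n := ⟨n - 1, Nat.sub_lt hn one_pos⟩

/-- embedding `[n-1] → [n]`. -/
def ι : Fin (n - 1) → Fin n := Fin.castLE (Nat.sub_le n 1)

/-- `[in|jn] = e_{ij} + e_{nn} - e_{in} - e_{jn}` for `i,j ∈ [n-1]`. -/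
def Bvec (hn : 0 < n) : Sym2 (Fin (n - 1)) → (Sym2 (Fin n) → ℤ) :=
  Sym2.lift ⟨fun i j =>
      e n (ι n i) (ι n j) + e n (lastIdx n hn) (lastIdx n hn)
        - e n (ι n i) (lastIdx n hn) - e n (ι n j) (lastIdx n hn),
    fun i j => by dsimp only; rw [e_comm n (ι n i) (ι n j)]; ring⟩

/-- The family `B'`: `[in|in]` on the diagonal, `2[in|jn]` off it. -/
noncomputable def B'vec (hn : 0 < n) (s : Sym2 (Fin (n - 1))) : Sym2 (Fin n) → ℤ :=
  if s.IsDiag then Bvec n hn s else 2 • Bvec n hn s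

/-- multiplicity (as ℕ) of the index `i` in the unordered pair `s`. -/
def wtN (s : Sym2 (Fin n)) : Fin n → ℕ :=
  Sym2.lift ⟨fun a b i => (if i = a then 1 else 0) + (if i = b then 1 else 0),
    fun a b => funext fun i => add_comm _ _⟩ s

/-- The Veronese degree of an exponent vector `u ∈ ℕ^P`. -/
def VN (u : Sym2 (Fin n) →₀ ℕ) : Fin n → ℕ := fun i => ∑ s : Sym2 (Fin n), u s * wtN n s i

/-- The fiber `V_n^{-1}[b] = {u ∈ ℕ^P : V_n u = b}`. -/
def fiber (b : Fin n → ℕ) : Set (Sym2 (Fin n) →₀ ℕ) := {u | VN n u = b}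

/-- natural inclusion `ℕ^P → ℤ^P`. -/
def toZ (u : Sym2 (Fin n) →₀ ℕ) : Sym2 (Fin n) → ℤ := fun s => (u s : ℤ)

lemma fiber_finite (b : Fin n → ℕ) : (fiber n b).Finite := by
  classical
  have hsub : fiber n b ⊆
      ↑(Finset.Iic ((Finsupp.equivFunOnFinite.symm fun _ => ∑ i, b i) : Sym2 (Fin n) →₀ ℕ)) := by
    intro u hu
    simp only [Finset.coe_Iic, Set.mem_Iic, Finsupp.le_def]
    intro s
    induction s using Sym2.ind with
    | _ i j =>
      have h1 : u s(i, j) * wtN n s(i, j) i ≤ VN n u i :=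
        Finset.single_le_sum (f := fun s => u s * wtN n s i)
          (fun s _ => Nat.zero_le _) (Finset.mem_univ s(i, j))
      have h2 : 1 ≤ wtN n s(i, j) i := by
        simp only [wtN, Sym2.lift_mk, if_pos rfl]
        exact Nat.le_add_right 1 _
      have h3 : u s(i, j) ≤ b i := by
        have hb : VN n u i = b i := congrFun hu i
        calc u s(i, j) ≤ u s(i, j) * wtN n s(i, j) i := Nat.le_mul_of_pos_right _ h2
          _ ≤ VN n u i := h1
          _ = b i := hb
      calc u s(i, j) ≤ b i := h3
        _ ≤ ∑ i, b i := Finset.single_le_sum (fun _ _ => Nat.zero_le _) (Finset.mem_univ _)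
        _ = (Finsupp.equivFunOnFinite.symm fun _ => ∑ i, b i) s(i, j) := by
            simp
  exact Set.Finite.subset (Finset.finite_toSet _) hsub

variable (k : Type*) [Field k]

/-- the polynomial ring `k[x_{ij}]`. -/
abbrev R := MvPolynomial (Sym2 (Fin n)) k

/-- The principal minor ideal `J_n`. -/
noncomputable def Jideal : Ideal (R n k) :=
  Ideal.span {f | ∃ i j : Fin n, i < j ∧ f = X s(i, i) * X s(j, j) - X s(i, j) ^ 2}

/-- The map `x_{ij} ↦ t_i t_j`. -/
noncomputable def veroHom : R n k →ₐ[k] MvPolynomial (Fin n) k :=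
  aeval fun s => Sym2.lift ⟨fun a b => X a * X b, fun a b => mul_comm _ _⟩ s

/-- The second Veronese ideal `I_n`. -/
noncomputable def Iideal : Ideal (R n k) := RingHom.ker (veroHom n k)

/-- A ℤ₂-twisting: an automorphism sending each variable to ± itself. -/
def IsTwisting (φ : R n k ≃ₐ[k] R n k) : Prop :=
  ∀ s : Sym2 (Fin n), φ (X s) = X s ∨ φ (X s) = - X s

/-- `f` is V_n-homogeneous of degree `b`. -/
def VHomog (f : R n k) (b : Fin n → ℕ) : Prop := ∀ u ∈ f.support, VN n u = b

/-- The fiber over `b` as a finite set. -/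
noncomputable def fiberFinset (b : Fin n → ℕ) : Finset (Sym2 (Fin n) →₀ ℕ) :=
  (fiber_finite n b).toFinset

/-- generating function of the canonical (0/1 off-diagonal) representatives of
the fiber over `b`. -/
noncomputable def pplusAt (b : Fin n → ℕ) : R n k :=
  ∑ u ∈ (fiberFinset n b).filter (fun u => ∀ s : Sym2 (Fin n), ¬s.IsDiag → u s ≤ 1),
    monomial u (1 : k)

/-- `p⁺_{n,j}` (for `n` odd): fiber over `(n-2,…,n-2) + e_j`. -/
noncomputable def pplusOdd (j : Fin n) : R n k :=
  pplusAt n k fun i => (n - 2) + if i = j then 1 else 0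

/-- `p⁺_n` (for `n` even): fiber over `(n-2,…,n-2)`. -/
noncomputable def pplusEven : R n k :=
  pplusAt n k fun _ => n - 2

/-- `p_n = ∏_{i<j∈[n-1]} (x_{ij} x_{nn} + x_{in} x_{jn})`. -/
noncomputable def pn (hn : 0 < n) : R n k :=
  ∏ p ∈ Finset.univ.filter (fun p : Fin (n - 1) × Fin (n - 1) => p.1 < p.2),
    (X s(ι n p.1, ι n p.2) * X s(lastIdx n hn, lastIdx n hn)
      + X s(ι n p.1, lastIdx n hn) * X s(ι n p.2, lastIdx n hn))


/-- the `V_n`-degree of `p⁺_{n,j}`: `(n-2,…,n-2) + e_j` if `n` is odd,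
`(n-2,…,n-2)` if `n` is even. -/
def bsel (j : Fin n) : Fin n → ℕ :=
  fun i => if n % 2 = 1 then (n - 2) + (if i = j then 1 else 0) else n - 2

/-- the polynomial `p⁺_{n,j}` (independent of `j` for `n` even). -/
noncomputable def pplus (j : Fin n) : R n k := pplusAt n k (bsel n j)

/-!
Modulo `J_n` a monomial is determined by its `V_n`-degree together with the parities of its
off-diagonal exponents, so a `V_n`-homogeneous polynomial lies in `J_n` as soon as its image in the
group algebra of the mod-2 chains of edges of `K_n` vanishes. The parities of two monomials of equal
degree differ by a mod-2 cycle. Both `p_n` and `p⁺_{n,j}` have images that are invariant under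
translation by cycles: each factor of `p_n` is fixed by one of the triangles through the vertex `n`,
which generate the cycle space, while `p⁺_{n,j}` becomes the sum over a whole coset of the cycle
space, its degree being large enough for every chain in the coset to occur. Hence
`(x^u - x^v) q ∈ J_n` whenever `x^u` and `x^v` have equal degree, and therefore `h q ∈ J_n` for
every homogeneous `h` whose coefficients sum to zero. Given two multiples of `q` of the same degree,
some nontrivial combination of the multipliers has this property.
-/

section Translation

variable {G K : Type*} [AddCommGroup G] [Semiring K]

/-- The group of translations of `G` that fix the element `Q` of the group algebra `K[G]`. -/
def periods (Q : AddMonoidAlgebra K G) : AddSubgroup G where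
  carrier := {c | AddMonoidAlgebra.single c 1 * Q = Q}
  zero_mem' := one_mul Q
  add_mem' {c d} (hc : _ = Q) (hd : _ = Q) := by
    rw [Set.mem_ofPred_eq, ← one_mul (1 : K), ← AddMonoidAlgebra.single_mul_single, mul_assoc,
      hd, hc]
  neg_mem' {c} (hc : _ = Q) := by
    calc AddMonoidAlgebra.single (-c) 1 * Q
        = AddMonoidAlgebra.single (-c) 1 * (AddMonoidAlgebra.single c 1 * Q) := by rw [hc]
      _ = Q := by
        rw [← mul_assoc, AddMonoidAlgebra.single_mul_single, neg_add_cancel, one_mul,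
          ← AddMonoidAlgebra.one_def, one_mul]

lemma mem_periods {c : G} {Q : AddMonoidAlgebra K G} :
    c ∈ periods Q ↔ AddMonoidAlgebra.single c 1 * Q = Q :=
  Iff.rfl

lemma periods_le_of_dvd {P Q : AddMonoidAlgebra K G} (h : P ∣ Q) : periods P ≤ periods Q := by
  obtain ⟨T, rfl⟩ := h
  intro c hc
  rw [mem_periods] at hc ⊢
  rw [← mul_assoc, hc]

lemma single_mul_eq_of_sub_mem_periods {a b : G} {Q : AddMonoidAlgebra K G}
    (h : a - b ∈ periods Q) :
    AddMonoidAlgebra.single a 1 * Q = AddMonoidAlgebra.single b 1 * Q := by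
  rw [← add_sub_cancel b a, ← one_mul (1 : K), ← AddMonoidAlgebra.single_mul_single, mul_assoc,
    mem_periods.1 h, one_mul]

lemma sub_mem_periods_single_add_single {a b : G} (h : a + a = b + b) :
    a - b ∈ periods (AddMonoidAlgebra.single a (1 : K) + AddMonoidAlgebra.single b 1) := by
  have ha : a - b + a = b := by rw [sub_add_eq_add_sub, h, add_sub_cancel_right]
  rw [mem_periods, mul_add, AddMonoidAlgebra.single_mul_single, AddMonoidAlgebra.single_mul_single,
    ha, sub_add_cancel, one_mul, add_comm]

lemma mem_periods_sum_single {c : G} {S : Finset G} (h : ∀ x, c + x ∈ S ↔ x ∈ S) :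
    c ∈ periods (∑ x ∈ S, AddMonoidAlgebra.single x (1 : K)) := by
  rw [mem_periods, Finset.mul_sum]
  simp only [AddMonoidAlgebra.single_mul_single, one_mul]
  exact Finset.sum_equiv (Equiv.addLeft c) (fun x => (h x).symm) fun _ _ => rfl

end Translation

section Weighted

open Finsupp (weight)

variable {σ M K : Type*} [AddCommMonoid M] {w : σ → M}

/-- Multiplication by `q` identifies, modulo the ideal `I`, any two monomials of equal weight. -/
def IdentifiesFibers [CommRing K] (w : σ → M) (I : Ideal (MvPolynomial σ K))
    (q : MvPolynomial σ K) : Prop :=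
  ∀ u v : σ →₀ ℕ, weight w u = weight w v → (monomial u 1 - monomial v 1) * q ∈ I

lemma IdentifiesFibers.mul_mem [CommRing K] {I : Ideal (MvPolynomial σ K)} {q h : MvPolynomial σ K}
    {c : M} (hq : IdentifiesFibers w I q) (hh : h.IsWeightedHomogeneous w c)
    (h_eval : eval 1 h = 0) : h * q ∈ I := by
  obtain rfl | ⟨u, hu⟩ := h.support.eq_empty_or_nonempty.imp_left support_eq_empty.1
  · rw [zero_mul]
    exact I.zero_mem
  have h_coeff : ∑ v ∈ h.support, coeff v h = 0 := by
    simpa only [eval_eq, Pi.one_apply, one_pow, Finset.prod_const_one, mul_one] using h_eval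
  have h_eq : h = ∑ v ∈ h.support, C (coeff v h) * (monomial v 1 - monomial u 1) := by
    simp only [mul_sub, C_mul_monomial, mul_one, Finset.sum_sub_distrib]
    rw [← map_sum, h_coeff, map_zero, sub_zero, ← as_sum]
  rw [h_eq, Finset.sum_mul]
  refine I.sum_mem fun v hv => ?_
  rw [mul_assoc]
  exact I.mul_mem_left _ <|
    hq v u ((hh (mem_support_iff.1 hv)).trans (hh (mem_support_iff.1 hu)).symm)

section Graded

variable [DecidableEq M] [PartialOrder M] [CanonicallyOrderedAdd M] [Sub M] [OrderedSub M]
  [AddLeftReflectLE M]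

attribute [local instance] weightedGradedAlgebra

lemma exists_isWeightedHomogeneous_sub_mul_mem [CommRing K] {I : Ideal (MvPolynomial σ K)}
    (hI : I.IsHomogeneous (weightedHomogeneousSubmodule K w)) {q f : MvPolynomial σ K} {b d : M}
    (hq : q.IsWeightedHomogeneous w d) (hf : f.IsWeightedHomogeneous w b)
    (hfI : f ∈ I ⊔ Ideal.span {q}) :
    ∃ h : MvPolynomial σ K, h.IsWeightedHomogeneous w (b - d) ∧ f - h * q ∈ I := by
  obtain ⟨j, hj, _, hy, rfl⟩ := Submodule.mem_sup.1 hfI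
  obtain ⟨a, rfl⟩ := Ideal.mem_span_singleton'.1 hy
  have h_comp : j + a * q - weightedHomogeneousComponent w b (a * q) ∈ I := by
    rw [← hf.weightedHomogeneousComponent_same, map_add, add_sub_cancel_right]
    exact weightedHomogeneousComponent_mem_of_mem K w hI hj b
  have h_decompose (x : MvPolynomial σ K) (m : M) :
      (DirectSum.decompose (weightedHomogeneousSubmodule K w) x m : MvPolynomial σ K) =
        weightedHomogeneousComponent w m x :=
    weightedDecomposition.decompose'_apply K w x m
  by_cases hdb : d ≤ b
  · refine ⟨weightedHomogeneousComponent w (b - d) a,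
      weightedHomogeneousComponent_isWeightedHomogeneous _ _, ?_⟩
    rwa [← h_decompose, ← DirectSum.coe_decompose_mul_of_right_mem_of_le _ hq hdb, h_decompose]
  · refine ⟨0, isWeightedHomogeneous_zero _ _ _, ?_⟩
    rwa [← h_decompose, DirectSum.coe_decompose_mul_of_right_mem_of_not_le _ hq hdb,
      ← zero_mul q] at h_comp

lemma IdentifiesFibers.exists_smul_add_smul_mem [Field K] {I : Ideal (MvPolynomial σ K)}
    {q f g : MvPolynomial σ K} {b d : M} (hqI : IdentifiesFibers w I q)
    (hI : I.IsHomogeneous (weightedHomogeneousSubmodule K w))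
    (hq : q.IsWeightedHomogeneous w d) (hf : f.IsWeightedHomogeneous w b)
    (hg : g.IsWeightedHomogeneous w b) (hfI : f ∈ I ⊔ Ideal.span {q})
    (hgI : g ∈ I ⊔ Ideal.span {q}) :
    ∃ r s : K, (r ≠ 0 ∨ s ≠ 0) ∧ r • f + s • g ∈ I := by
  obtain ⟨h₁, hh₁, hfh₁⟩ := exists_isWeightedHomogeneous_sub_mul_mem hI hq hf hfI
  obtain ⟨h₂, hh₂, hgh₂⟩ := exists_isWeightedHomogeneous_sub_mul_mem hI hq hg hgI
  obtain ⟨r, s, hrs, h_eval⟩ : ∃ r s : K, (r ≠ 0 ∨ s ≠ 0) ∧ r * eval 1 h₁ + s * eval 1 h₂ = 0 := by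
    by_cases h : eval 1 h₁ = 0
    · exact ⟨1, 0, .inl one_ne_zero, by rw [h, mul_zero, zero_mul, add_zero]⟩
    · exact ⟨eval 1 h₂, -eval 1 h₁, .inr (neg_ne_zero.2 h), by ring⟩
  refine ⟨r, s, hrs, ?_⟩
  have h_comb : (C r * h₁ + C s * h₂) * q ∈ I := by
    refine hqI.mul_mem (c := b - d) (.add ?_ ?_) ?_
    · simpa only [zero_add] using (isWeightedHomogeneous_C w r).mul hh₁
    · simpa only [zero_add] using (isWeightedHomogeneous_C w s).mul hh₂
    · simpa only [map_add, map_mul, eval_C] using h_eval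
  have h_split : r • f + s • g =
      C r * (f - h₁ * q) + C s * (g - h₂ * q) + (C r * h₁ + C s * h₂) * q := by
    simp only [smul_eq_C_mul]
    ring
  rw [h_split]
  exact I.add_mem (I.add_mem (I.mul_mem_left _ hfh₁) (I.mul_mem_left _ hgh₂)) h_comb

end Graded

end Weighted

section Kernel

variable {σ G K : Type*} [CommRing K] [AddCommMonoid G]

lemma mapDomainAlgHom_monomial (π : (σ →₀ ℕ) →+ G) (u : σ →₀ ℕ) (r : K) :
    AddMonoidAlgebra.mapDomainAlgHom K K π (monomial u r : MvPolynomial σ K) =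
      AddMonoidAlgebra.single (π u) r :=
  AddMonoidAlgebra.mapDomain_single

lemma mem_of_mapDomainAlgHom_eq_zero {I : Ideal (MvPolynomial σ K)} {π : (σ →₀ ℕ) →+ G}
    {f : MvPolynomial σ K}
    (hI : ∀ u ∈ f.support, ∀ v ∈ f.support, π u = π v → monomial u 1 - monomial v 1 ∈ I)
    (hf : AddMonoidAlgebra.mapDomainAlgHom K K π f = 0) : f ∈ I := by
  let ρ : G → σ →₀ ℕ := Function.invFunOn π f.support
  have h_zero : ∑ u ∈ f.support, monomial (ρ (π u)) (coeff u f) = 0 := by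
    have h := congrArg (AddMonoidAlgebra.mapDomainLinearMap K K ρ) hf
    rw [as_sum f, map_sum, map_sum, map_zero] at h
    simp only [mapDomainAlgHom_monomial, AddMonoidAlgebra.mapDomainLinearMap_single] at h
    exact h
  have h_eq : f = ∑ u ∈ f.support, C (coeff u f) * (monomial u 1 - monomial (ρ (π u)) 1) := by
    simp only [mul_sub, C_mul_monomial, mul_one, Finset.sum_sub_distrib]
    rw [h_zero, sub_zero, ← as_sum]
  rw [h_eq]
  refine I.sum_mem fun u hu => I.mul_mem_left _ (hI u hu _ ?_ ?_)
  · exact Function.invFunOn_mem ⟨u, hu, rfl⟩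
  · exact (Function.invFunOn_eq ⟨u, hu, rfl⟩).symm

end Kernel

section Exponents

/-- The edges of the complete graph on `α`; they index the off-diagonal entries of a symmetric
matrix. -/
abbrev Edge (α : Type*) := {s : Sym2 α // ¬s.IsDiag}

lemma sum_sym2_eq_sum_diag_add_sum_edge {α M : Type*} [Fintype α] [DecidableEq α] [AddCommMonoid M]
    (f : Sym2 α → M) : ∑ s, f s = ∑ i, f s(i, i) + ∑ s : Edge α, f s := by
  have h_bij : Function.Bijective fun i : α => (⟨s(i, i), rfl⟩ : {s : Sym2 α // s.IsDiag}) :=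
    ⟨fun i j h => Sym2.diag_injective (congrArg Subtype.val h),
      fun ⟨s, hs⟩ => by
        obtain ⟨i, rfl⟩ : s ∈ Set.range Sym2.diag := Sym2.range_diag ▸ hs
        exact ⟨i, rfl⟩⟩
  rw [← Fintype.sum_subtype_add_sum_subtype Sym2.IsDiag, ← h_bij.sum_comp]

lemma exists_finsupp_sym2_eq {α M : Type*} [Finite α] [Zero M] (d : α → M) (e : Edge α → M) :
    ∃ u : Sym2 α →₀ M, (∀ i, u s(i, i) = d i) ∧ ∀ s : Edge α, u s = e s := by
  have h_edge (s : Edge α) : ¬∃ i, Sym2.diag i = s.1 := fun ⟨i, hi⟩ => s.2 (hi ▸ Sym2.diag_isDiag i)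
  refine ⟨Finsupp.equivFunOnFinite.symm
    (Function.extend Sym2.diag d (Function.extend Subtype.val e 0)), fun i => ?_, fun s => ?_⟩
  · exact (Sym2.diag_injective.extend_apply _ _ i :)
  · rw [Finsupp.equivFunOnFinite_symm_apply_apply, Function.extend_apply' _ _ _ (h_edge s),
      Subtype.val_injective.extend_apply]

variable {n : ℕ}

lemma sum_wtN_smul {M : Type*} [AddCommMonoid M] (z : Fin n → M) (i j : Fin n) :
    ∑ a, wtN n s(i, j) a • z a = z i + z j := by
  simp only [wtN, Sym2.lift_mk, add_smul, ite_smul, one_smul, zero_smul, Finset.sum_add_distrib,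
    Finset.sum_ite_eq', Finset.mem_univ, if_true]

lemma VN_eq_weight (u : Sym2 (Fin n) →₀ ℕ) : VN n u = Finsupp.weight (wtN n) u := by
  ext i
  simp only [VN, Finsupp.weight_eq_sum, Finset.sum_apply, Pi.smul_apply, smul_eq_mul]

lemma VN_apply (u : Sym2 (Fin n) →₀ ℕ) (i : Fin n) :
    VN n u i = 2 * u s(i, i) + ∑ s : Edge (Fin n), u s * wtN n s i := by
  have h_diag (j : Fin n) : u s(j, j) * wtN n s(j, j) i = if i = j then 2 * u s(j, j) else 0 := by
    simp only [wtN, Sym2.lift_mk]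
    split_ifs <;> ring
  rw [VN, sum_sym2_eq_sum_diag_add_sum_edge]
  simp only [h_diag, Finset.sum_ite_eq, Finset.mem_univ, if_true]

lemma sum_smul_sum_wtN_smul {M : Type*} [AddCommMonoid M] (u : Sym2 (Fin n) →₀ ℕ)
    (z : Fin n → M) : ∑ s, u s • ∑ a, wtN n s a • z a = ∑ a, VN n u a • z a := by
  simp only [VN, Finset.smul_sum, Finset.sum_smul, mul_smul]
  exact Finset.sum_comm

lemma two_mul_sum_eq_sum_VN (u : Sym2 (Fin n) →₀ ℕ) : 2 * ∑ s, u s = ∑ i, VN n u i := by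
  have h_two (s : Sym2 (Fin n)) : ∑ a, wtN n s a = 2 := by
    induction s with | _ i j => simpa using sum_wtN_smul (M := ℕ) 1 i j
  have h := sum_smul_sum_wtN_smul u fun _ => 1
  simp only [smul_eq_mul, mul_one, h_two] at h
  rw [← h, Finset.mul_sum]
  simp only [mul_comm]

lemma map_eq_sum_smul_single {M : Type*} [AddCommMonoid M] (φ : (Sym2 (Fin n) →₀ ℕ) →+ M)
    (u : Sym2 (Fin n) →₀ ℕ) : φ u = ∑ s, u s • φ (Finsupp.single s 1) := by
  conv_lhs => rw [← Finsupp.univ_sum_single u, map_sum]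
  simp only [← map_nsmul, Finsupp.smul_single_one]

lemma map_eq_of_VN_eq {M : Type*} [AddCancelCommMonoid M] {φ : (Sym2 (Fin n) →₀ ℕ) →+ M}
    {l : Fin n} (hφ : ∀ i j, φ (.single s(i, j) 1 + .single s(l, l) 1) =
      φ (.single s(i, l) 1 + .single s(j, l) 1))
    {u v : Sym2 (Fin n) →₀ ℕ} (huv : VN n u = VN n v) : φ u = φ v := by
  have h_star (s : Sym2 (Fin n)) :
      φ (.single s 1) + φ (.single s(l, l) 1) = ∑ a, wtN n s a • φ (.single s(a, l) 1) := by
    induction s with | _ i j => rw [sum_wtN_smul, ← map_add, ← map_add, hφ]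
  have h_add (u : Sym2 (Fin n) →₀ ℕ) :
      φ u + (∑ s, u s) • φ (.single s(l, l) 1) = ∑ a, VN n u a • φ (.single s(a, l) 1) := by
    rw [map_eq_sum_smul_single, Finset.sum_smul, ← Finset.sum_add_distrib]
    simp only [← smul_add, h_star, sum_smul_sum_wtN_smul]
  have h_sum : ∑ s, u s = ∑ s, v s := by
    apply Nat.eq_of_mul_eq_mul_left two_pos
    rw [two_mul_sum_eq_sum_VN, two_mul_sum_eq_sum_VN, huv]
  apply add_right_cancel (b := (∑ s, v s) • φ (.single s(l, l) 1))
  rw [h_add, ← h_sum, h_add, huv]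

variable (n) in
/-- The off-diagonal exponents modulo 2, as a mod-2 chain of edges of the complete graph. -/
def parity : (Sym2 (Fin n) →₀ ℕ) →+ (Edge (Fin n) → ZMod 2) where
  toFun u s := u s
  map_zero' := funext fun _ => Nat.cast_zero
  map_add' _ _ := funext fun _ => Nat.cast_add _ _

lemma map_eq_residue_add {M : Type*} [AddCommMonoid M] {φ : (Sym2 (Fin n) →₀ ℕ) →+ M}
    (hφ : ∀ i j, i ≠ j → φ (.single s(i, i) 1 + .single s(j, j) 1) = φ (2 • .single s(i, j) 1))
    (u : Sym2 (Fin n) →₀ ℕ) :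
    φ u = ∑ s : Edge (Fin n), (u s % 2) • φ (.single s 1) +
      ∑ i, (u s(i, i) + ∑ s : Edge (Fin n), u s / 2 * wtN n s i) • φ (.single s(i, i) 1) := by
  have h_two (s : Edge (Fin n)) :
      2 • φ (.single s 1) = ∑ a, wtN n s a • φ (.single s(a, a) 1) := by
    obtain ⟨s, hs⟩ := s
    induction s with | _ i j => rw [sum_wtN_smul, ← map_add, hφ i j hs, map_nsmul]
  have h_edge (s : Edge (Fin n)) : u s • φ (.single s 1) = (u s % 2) • φ (.single s 1) +
      ∑ a, (u s / 2 * wtN n s a) • φ (.single s(a, a) 1) := by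
    simp only [mul_smul]
    rw [← Finset.smul_sum, ← h_two, ← mul_smul, ← add_smul, mul_comm, Nat.mod_add_div]
  rw [map_eq_sum_smul_single, sum_sym2_eq_sum_diag_add_sum_edge]
  simp only [h_edge, Finset.sum_add_distrib, add_smul, Finset.sum_smul]
  rw [Finset.sum_comm]
  abel

lemma map_eq_of_VN_eq_of_parity_eq {M : Type*} [AddCommMonoid M] {φ : (Sym2 (Fin n) →₀ ℕ) →+ M}
    (hφ : ∀ i j, i ≠ j → φ (.single s(i, i) 1 + .single s(j, j) 1) = φ (2 • .single s(i, j) 1))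
    {u v : Sym2 (Fin n) →₀ ℕ} (hVN : VN n u = VN n v) (h_parity : parity n u = parity n v) :
    φ u = φ v := by
  have h_mod (s : Edge (Fin n)) : u s % 2 = v s % 2 :=
    (ZMod.natCast_eq_natCast_iff' _ _ _).1 (congrFun h_parity s)
  have h_VN (u : Sym2 (Fin n) →₀ ℕ) (i : Fin n) : VN n u i =
      ∑ s : Edge (Fin n), u s % 2 * wtN n s i +
        2 * (u s(i, i) + ∑ s : Edge (Fin n), u s / 2 * wtN n s i) := by
    rw [VN_apply, mul_add, Finset.mul_sum, add_left_comm, ← Finset.sum_add_distrib]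
    simp only [← mul_assoc, ← add_mul, Nat.mod_add_div]
  have h_diag (i : Fin n) : u s(i, i) + ∑ s : Edge (Fin n), u s / 2 * wtN n s i =
      v s(i, i) + ∑ s : Edge (Fin n), v s / 2 * wtN n s i := by
    have h := congrFun hVN i
    rw [h_VN, h_VN] at h
    simp only [h_mod] at h
    omega
  rw [map_eq_residue_add hφ u, map_eq_residue_add hφ v]
  simp only [h_mod, h_diag]

variable (n) in
/-- The mod-2 boundary map of the complete graph on `Fin n`. -/
def boundary : (Edge (Fin n) → ZMod 2) →+ (Fin n → ZMod 2) where
  toFun x i := ∑ s, x s * wtN n s i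
  map_zero' := by
    ext i
    simp only [Pi.zero_apply, zero_mul, Finset.sum_const_zero]
  map_add' x y := by
    ext i
    simp only [Pi.add_apply, add_mul, Finset.sum_add_distrib]

lemma boundary_parity (u : Sym2 (Fin n) →₀ ℕ) :
    boundary n (parity n u) = fun i => (VN n u i : ZMod 2) := by
  ext i
  rw [VN_apply]
  push_cast
  rw [(by decide : (2 : ZMod 2) = 0), zero_mul, zero_add]
  rfl

lemma eq_of_VN_eq_of_parity_eq {u v : Sym2 (Fin n) →₀ ℕ}
    (hu : ∀ s : Sym2 (Fin n), ¬s.IsDiag → u s ≤ 1) (hv : ∀ s : Sym2 (Fin n), ¬s.IsDiag → v s ≤ 1)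
    (hVN : VN n u = VN n v) (h_parity : parity n u = parity n v) : u = v := by
  have h_edge (s : Edge (Fin n)) : u s = v s := by
    have h : u s % 2 = v s % 2 := (ZMod.natCast_eq_natCast_iff' _ _ _).1 (congrFun h_parity s)
    have := hu s s.2
    have := hv s s.2
    omega
  ext s
  by_cases hs : s.IsDiag
  · obtain ⟨i, rfl⟩ : s ∈ Set.range Sym2.diag := Sym2.range_diag ▸ hs
    have h := congrFun hVN i
    simp only [VN_apply, h_edge] at h
    exact Nat.eq_of_mul_eq_mul_left two_pos (Nat.add_right_cancel h)
  · exact h_edge ⟨s, hs⟩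

lemma sum_wtN_edge_le (i : Fin n) : ∑ s : Edge (Fin n), wtN n s i ≤ n - 1 := by
  have h_wt (s : Edge (Fin n)) : wtN n s i = if i ∈ s.1 then 1 else 0 := by
    obtain ⟨s, hs⟩ := s
    induction s with
    | _ j l =>
      have hjl : j ≠ l := hs
      simp only [wtN, Sym2.lift_mk, Sym2.mem_iff]
      grind
  have h_sub : (Finset.univ.filter fun s : Edge (Fin n) => i ∈ s.1).map (.subtype _) ⊆
      (Finset.univ.erase i).image fun j => s(i, j) := by
    intro s hs
    simp only [Finset.mem_map, Finset.mem_filter, Finset.mem_univ, true_and] at hs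
    obtain ⟨⟨_, hs⟩, ⟨j, rfl⟩, rfl⟩ := hs
    have hij : i ≠ j := hs
    exact Finset.mem_image_of_mem _ (Finset.mem_erase.2 ⟨hij.symm, Finset.mem_univ j⟩)
  simp only [h_wt, Finset.sum_boole, Nat.cast_id]
  calc (Finset.univ.filter fun s : Edge (Fin n) => i ∈ s.1).card
      ≤ ((Finset.univ.erase i).image fun j => s(i, j)).card := by
        rw [← Finset.card_map]
        exact Finset.card_le_card h_sub
    _ ≤ (Finset.univ.erase i).card := Finset.card_image_le
    _ = n - 1 := by rw [Finset.card_erase_of_mem (Finset.mem_univ i), Finset.card_univ,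
        Fintype.card_fin]

lemma exists_VN_eq_and_parity_eq {b : Fin n → ℕ} (hb : ∀ i, n - 2 ≤ b i)
    {x : Edge (Fin n) → ZMod 2} (hx : boundary n x = fun i => (b i : ZMod 2)) :
    ∃ u : Sym2 (Fin n) →₀ ℕ, (∀ s : Sym2 (Fin n), ¬s.IsDiag → u s ≤ 1) ∧
      VN n u = b ∧ parity n u = x := by
  let y (i : Fin n) : ℕ := ∑ s : Edge (Fin n), (x s).val * wtN n s i
  obtain ⟨u, hu_diag, hu_edge⟩ :=
    exists_finsupp_sym2_eq (fun i => (b i - y i) / 2) fun s => (x s).val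
  have h_val (s : Edge (Fin n)) : (x s).val ≤ 1 := Nat.le_of_lt_succ (ZMod.val_lt _)
  have hy_le (i : Fin n) : y i ≤ b i + 1 := by
    calc y i
        ≤ ∑ s : Edge (Fin n), 1 * wtN n s i :=
          Finset.sum_le_sum fun s _ => Nat.mul_le_mul_right _ (h_val s)
      _ ≤ n - 1 := by simpa only [one_mul] using sum_wtN_edge_le i
      _ ≤ b i + 1 := by have := hb i; omega
  have hy_mod (i : Fin n) : y i % 2 = b i % 2 := by
    rw [← ZMod.natCast_eq_natCast_iff', ← congrFun hx i]
    simp only [y, boundary, Nat.cast_sum, Nat.cast_mul, ZMod.natCast_zmod_val, AddMonoidHom.coe_mk,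
      ZeroHom.coe_mk]
  refine ⟨u, fun s hs => (hu_edge ⟨s, hs⟩).trans_le (h_val _), funext fun i => ?_,
    funext fun s => ?_⟩
  · have := hy_le i
    have := hy_mod i
    have hVN : VN n u i = 2 * ((b i - y i) / 2) + y i := by
      simp only [VN_apply, hu_diag, hu_edge, y]
    omega
  · exact (congrArg Nat.cast (hu_edge s)).trans (ZMod.natCast_zmod_val (x s))

end Exponents

section PrincipalMinors

variable {n : ℕ} {k : Type*} [Field k]

lemma vhomog_iff_isWeightedHomogeneous {f : R n k} {b : Fin n → ℕ} :
    VHomog n k f b ↔ f.IsWeightedHomogeneous (wtN n) b := by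
  simp only [VHomog, IsWeightedHomogeneous, VN_eq_weight, mem_support_iff, ne_eq]

lemma wtN_add_wtN (i j l m : Fin n) :
    wtN n s(i, j) + wtN n s(l, m) = wtN n s(i, l) + wtN n s(j, m) := by
  ext a
  simp only [wtN, Sym2.lift_mk, Pi.add_apply]
  ring

attribute [local instance] weightedGradedAlgebra in
lemma isHomogeneous_Jideal :
    (Jideal n k).IsHomogeneous (weightedHomogeneousSubmodule k (wtN n)) := by
  refine Ideal.homogeneous_span _ _ ?_
  rintro _ ⟨i, j, -, rfl⟩
  refine ⟨wtN n s(i, j) + wtN n s(i, j), Submodule.sub_mem _ ?_ ?_⟩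
  · rw [← wtN_add_wtN]
    exact (isWeightedHomogeneous_X k _ _).mul (isWeightedHomogeneous_X k _ _)
  · rw [sq]
    exact (isWeightedHomogeneous_X k _ _).mul (isWeightedHomogeneous_X k _ _)

lemma principal_minor_mem_Jideal {i j : Fin n} (hij : i ≠ j) :
    (X s(i, i) * X s(j, j) - X s(i, j) ^ 2 : R n k) ∈ Jideal n k := by
  obtain hij | hij := lt_or_gt_of_ne hij
  · exact Ideal.subset_span ⟨i, j, hij, rfl⟩
  · rw [mul_comm, Sym2.eq_swap (a := i) (b := j)]
    exact Ideal.subset_span ⟨j, i, hij, rfl⟩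

lemma monomial_sub_monomial_mem_Jideal {u v : Sym2 (Fin n) →₀ ℕ} (hVN : VN n u = VN n v)
    (h_parity : parity n u = parity n v) : (monomial u 1 - monomial v 1 : R n k) ∈ Jideal n k := by
  let φ : (Sym2 (Fin n) →₀ ℕ) →+ Additive (R n k ⧸ Jideal n k) :=
    MonoidHom.toAdditiveRight ((Ideal.Quotient.mk (Jideal n k)).toMonoidHom.comp
      (monomialOneHom k (Sym2 (Fin n))))
  have hφ (i j : Fin n) (hij : i ≠ j) :
      φ (.single s(i, i) 1 + .single s(j, j) 1) = φ (2 • .single s(i, j) 1) := by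
    refine Ideal.Quotient.eq.2 ?_
    have h := principal_minor_mem_Jideal (k := k) hij
    rwa [X, X, X, monomial_pow, monomial_mul, one_pow, one_mul] at h
  exact Ideal.Quotient.eq.1 (map_eq_of_VN_eq_of_parity_eq hφ hVN h_parity)

variable (n k) in
/-- The specialisation of `k[x]` to the group algebra of the mod-2 chains of edges that sends
diagonal variables to 1 and `x_{ij}` to the edge `ij`. -/
noncomputable def parityHom : R n k →ₐ[k] AddMonoidAlgebra k (Edge (Fin n) → ZMod 2) :=
  AddMonoidAlgebra.mapDomainAlgHom k k (parity n)

lemma parityHom_monomial (u : Sym2 (Fin n) →₀ ℕ) (r : k) :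
    parityHom n k (monomial u r) = AddMonoidAlgebra.single (parity n u) r :=
  mapDomainAlgHom_monomial _ _ _

lemma mem_Jideal_of_parityHom_eq_zero {f : R n k} {b : Fin n → ℕ}
    (hf : f.IsWeightedHomogeneous (wtN n) b) (hf_zero : parityHom n k f = 0) : f ∈ Jideal n k := by
  refine mem_of_mapDomainAlgHom_eq_zero (fun u hu v hv huv => ?_) hf_zero
  rw [← vhomog_iff_isWeightedHomogeneous] at hf
  exact monomial_sub_monomial_mem_Jideal ((hf u hu).trans (hf v hv).symm) huv

lemma identifiesFibers_Jideal {q : R n k} {d : Fin n → ℕ} (hq : q.IsWeightedHomogeneous (wtN n) d)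
    (h_periods : ∀ u v, VN n u = VN n v → parity n u - parity n v ∈ periods (parityHom n k q)) :
    IdentifiesFibers (wtN n) (Jideal n k) q := by
  intro u v huv
  have h_diff : (monomial u 1 - monomial v 1 : R n k).IsWeightedHomogeneous (wtN n)
      (Finsupp.weight (wtN n) u) :=
    (weightedHomogeneousSubmodule k (wtN n) _).sub_mem (isWeightedHomogeneous_monomial _ _ _ rfl)
      (isWeightedHomogeneous_monomial _ _ _ huv.symm)
  refine mem_Jideal_of_parityHom_eq_zero (h_diff.mul hq) ?_
  rw [← VN_eq_weight, ← VN_eq_weight] at huv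
  rw [map_mul, map_sub, parityHom_monomial, parityHom_monomial, sub_mul, sub_eq_zero]
  exact single_mul_eq_of_sub_mem_periods (h_periods u v huv)

end PrincipalMinors

section Generators

variable {n : ℕ} {k : Type*} [Field k]

lemma parity_single_diag (i : Fin n) (m : ℕ) : parity n (.single s(i, i) m) = 0 := by
  ext s
  have hs : s(i, i) ≠ s.1 := fun h => s.2 (h ▸ Sym2.diag_isDiag i)
  exact (congrArg Nat.cast (Finsupp.single_eq_of_ne' hs)).trans Nat.cast_zero

lemma parity_two_nsmul (u : Sym2 (Fin n) →₀ ℕ) : parity n (2 • u) = 0 := by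
  rw [map_nsmul]
  exact funext fun s => CharTwo.two_nsmul _

lemma exists_isWeightedHomogeneous_pn (hn : 0 < n) :
    ∃ d, (pn n k hn).IsWeightedHomogeneous (wtN n) d := by
  refine ⟨_, .prod _ _ (fun p : Fin (n - 1) × Fin (n - 1) =>
    wtN n s(ι n p.1, ι n p.2) + wtN n s(lastIdx n hn, lastIdx n hn)) fun p _ => .add ?_ ?_⟩
  · exact (isWeightedHomogeneous_X k _ _).mul (isWeightedHomogeneous_X k _ _)
  · rw [wtN_add_wtN]
    exact (isWeightedHomogeneous_X k _ _).mul (isWeightedHomogeneous_X k _ _)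

lemma factor_dvd_pn_of_lt {hn : 0 < n} {i j : Fin (n - 1)} (hij : i < j) :
    (X s(ι n i, ι n j) * X s(lastIdx n hn, lastIdx n hn) +
      X s(ι n i, lastIdx n hn) * X s(ι n j, lastIdx n hn) : R n k) ∣ pn n k hn := by
  have h_mem : (i, j) ∈ Finset.univ.filter fun p : Fin (n - 1) × Fin (n - 1) => p.1 < p.2 :=
    Finset.mem_filter.2 ⟨Finset.mem_univ _, hij⟩
  rw [pn, ← Finset.mul_prod_erase _ _ h_mem]
  exact dvd_mul_right _ _

lemma exists_ι_eq {hn : 0 < n} {i : Fin n} (hi : i ≠ lastIdx n hn) : ∃ j, ι n j = i := by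
  have : (i : ℕ) ≠ n - 1 := fun h => hi (Fin.ext h)
  exact ⟨⟨i, by omega⟩, rfl⟩

lemma factor_dvd_pn {hn : 0 < n} {i j : Fin n} (hi : i ≠ lastIdx n hn) (hj : j ≠ lastIdx n hn)
    (hij : i ≠ j) :
    (X s(i, j) * X s(lastIdx n hn, lastIdx n hn) + X s(i, lastIdx n hn) * X s(j, lastIdx n hn) :
      R n k) ∣ pn n k hn := by
  obtain ⟨i, rfl⟩ := exists_ι_eq hi
  obtain ⟨j, rfl⟩ := exists_ι_eq hj
  obtain h_lt | h_lt := lt_or_gt_of_ne (ne_of_apply_ne (ι n) hij)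
  · exact factor_dvd_pn_of_lt h_lt
  · rw [Sym2.eq_swap (a := ι n i) (b := ι n j), mul_comm (X s(ι n i, _))]
    exact factor_dvd_pn_of_lt h_lt

lemma parity_triangle_mem_periods_pn {hn : 0 < n} {i j : Fin n} (hi : i ≠ lastIdx n hn)
    (hj : j ≠ lastIdx n hn) (hij : i ≠ j) :
    parity n (.single s(i, j) 1 + .single s(lastIdx n hn, lastIdx n hn) 1) -
        parity n (.single s(i, lastIdx n hn) 1 + .single s(j, lastIdx n hn) 1) ∈
      periods (parityHom n k (pn n k hn)) := by
  refine periods_le_of_dvd (map_dvd (parityHom n k) (factor_dvd_pn hi hj hij)) ?_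
  simp only [X, monomial_mul, one_mul, map_add (parityHom n k), parityHom_monomial]
  refine sub_mem_periods_single_add_single ?_
  rw [← two_nsmul, ← two_nsmul, ← map_nsmul, ← map_nsmul, parity_two_nsmul, parity_two_nsmul]

lemma parity_sub_parity_mem_periods_pn {hn : 0 < n} {u v : Sym2 (Fin n) →₀ ℕ}
    (huv : VN n u = VN n v) :
    parity n u - parity n v ∈ periods (parityHom n k (pn n k hn)) := by
  let φ := (QuotientAddGroup.mk' (periods (parityHom n k (pn n k hn)))).comp (parity n)
  have hφ (i j : Fin n) : φ (.single s(i, j) 1 + .single s(lastIdx n hn, lastIdx n hn) 1) =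
      φ (.single s(i, lastIdx n hn) 1 + .single s(j, lastIdx n hn) 1) := by
    by_cases hi : i = lastIdx n hn
    · rw [hi, Sym2.eq_swap, add_comm]
    by_cases hj : j = lastIdx n hn
    · rw [hj]
    refine QuotientAddGroup.eq_iff_sub_mem.2 ?_
    by_cases hij : i = j
    · rw [hij, ← two_nsmul, parity_two_nsmul, map_add, parity_single_diag, parity_single_diag,
        add_zero, sub_zero]
      exact zero_mem _
    · exact parity_triangle_mem_periods_pn hi hj hij
  exact QuotientAddGroup.eq_iff_sub_mem.1 (map_eq_of_VN_eq hφ huv)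

lemma mem_fiberFinset {u : Sym2 (Fin n) →₀ ℕ} {b : Fin n → ℕ} :
    u ∈ fiberFinset n b ↔ VN n u = b :=
  Set.Finite.mem_toFinset _

lemma isWeightedHomogeneous_pplusAt (b : Fin n → ℕ) :
    (pplusAt n k b).IsWeightedHomogeneous (wtN n) b := by
  refine (weightedHomogeneousSubmodule k (wtN n) b).sum_mem fun u hu => ?_
  exact isWeightedHomogeneous_monomial _ _ _
    (VN_eq_weight u ▸ mem_fiberFinset.1 (Finset.mem_filter.1 hu).1)

lemma parityHom_pplusAt {b : Fin n → ℕ} (hb : ∀ i, n - 2 ≤ b i) :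
    parityHom n k (pplusAt n k b) =
      ∑ x with boundary n x = fun i => (b i : ZMod 2), AddMonoidAlgebra.single x 1 := by
  rw [pplusAt, map_sum]
  refine Finset.sum_bij (fun u _ => parity n u) ?_ ?_ ?_ fun u _ => parityHom_monomial u 1
  · intro u hu
    rw [Finset.mem_filter, mem_fiberFinset] at hu
    rw [Finset.mem_filter, boundary_parity, hu.1]
    exact ⟨Finset.mem_univ _, rfl⟩
  · intro u hu v hv huv
    rw [Finset.mem_filter, mem_fiberFinset] at hu hv
    exact eq_of_VN_eq_of_parity_eq hu.2 hv.2 (hu.1.trans hv.1.symm) huv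
  · intro x hx
    obtain ⟨u, hu, hVN, rfl⟩ := exists_VN_eq_and_parity_eq hb (Finset.mem_filter.1 hx).2
    exact ⟨u, Finset.mem_filter.2 ⟨mem_fiberFinset.2 hVN, hu⟩, rfl⟩

lemma parity_sub_parity_mem_periods_pplusAt {b : Fin n → ℕ} (hb : ∀ i, n - 2 ≤ b i)
    {u v : Sym2 (Fin n) →₀ ℕ} (huv : VN n u = VN n v) :
    parity n u - parity n v ∈ periods (parityHom n k (pplusAt n k b)) := by
  rw [parityHom_pplusAt hb]
  refine mem_periods_sum_single fun x => ?_
  rw [Finset.mem_filter_univ, Finset.mem_filter_univ, map_add, map_sub, boundary_parity,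
    boundary_parity, huv, sub_self, zero_add]

lemma sub_two_le_bsel (i j : Fin n) : n - 2 ≤ bsel n j i := by
  unfold bsel
  split_ifs <;> omega

theorem hilbert_function_at_most_one_general (hn : 0 < n) {q : R n k}
    (hq : q = pn n k hn ∨ ∃ c : Fin n → ℕ, (∀ i, n - 2 ≤ c i) ∧ q = pplusAt n k c)
    {b : Fin n → ℕ} {f g : R n k} (hf : VHomog n k f b) (hg : VHomog n k g b)
    (hfI : f ∈ Jideal n k + Ideal.span {q}) (hgI : g ∈ Jideal n k + Ideal.span {q}) :
    ∃ a d : k, (a ≠ 0 ∨ d ≠ 0) ∧ a • f + d • g ∈ Jideal n k := by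
  rw [vhomog_iff_isWeightedHomogeneous] at hf hg
  obtain ⟨d, hd, hqJ⟩ : ∃ d, q.IsWeightedHomogeneous (wtN n) d ∧
      IdentifiesFibers (wtN n) (Jideal n k) q := by
    obtain rfl | ⟨c, hc, rfl⟩ := hq
    · obtain ⟨d, hd⟩ := exists_isWeightedHomogeneous_pn (k := k) hn
      exact ⟨d, hd, identifiesFibers_Jideal hd fun _ _ => parity_sub_parity_mem_periods_pn⟩
    · have hd := isWeightedHomogeneous_pplusAt (k := k) c
      exact ⟨c, hd, identifiesFibers_Jideal hd fun _ _ => parity_sub_parity_mem_periods_pplusAt hc⟩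
  exact hqJ.exists_smul_add_smul_mem isHomogeneous_Jideal hd hf hg hfI hgI

end Generators

/-- The `V_n`-graded Hilbert function of `⟨p_n⟩ ⊆ k[x]/J_n` takes
only the values 0 and 1: any two `V_n`-homogeneous polynomials of the same `V_n`-degree
lying in `J_n + ⟨p_n⟩` are `k`-linearly dependent modulo `J_n`; and the same holds with
`p_n` replaced by any `p⁺_{n,i}`. -/
theorem hilbert_function_at_most_one (n : ℕ) (hn : 3 ≤ n) (k : Type*) [Field k]
    (q : R n k)
    (hq : q = pn n k (by omega) ∨ ∃ j : Fin n, q = pplus n k j)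
    (b : Fin n → ℕ) (f g : R n k)
    (hf : VHomog n k f b) (hg : VHomog n k g b)
    (hfI : f ∈ Jideal n k + Ideal.span {q})
    (hgI : g ∈ Jideal n k + Ideal.span {q}) :
    ∃ a d : k, (a ≠ 0 ∨ d ≠ 0) ∧ a • f + d • g ∈ Jideal n k :=
  hilbert_function_at_most_one_general (by omega)
    (hq.imp_right fun ⟨j, hj⟩ => ⟨bsel n j, fun i => sub_two_le_bsel i j, hj⟩) hf hg hfI hgI

end Veronese
end

section
/- Let k be an algebraically closed field, L ⊆ ℤ^n a subgroup with saturation Sat(L) = { u ∈ ℤ^n : m·u ∈ L for some integer m ≥ 1 }, and assume char k = 0 or char k does not divide the (finite) index [Sat(L) : L]. Let ρ : L → kˣ be a group homomorphism (a partial character), let E be the (finite) set of all group homomorphisms ρ' : Sat(L) → kˣ extending ρ, and for a partial character τ let I(τ) ⊆ k[ℤ^n] be the ideal generated by { x^u − τ(u) : u ∈ dom(τ) }. Then I(ρ) = ∩_{ρ' ∈ E} I(ρ'), each I(ρ') is prime, and for every ρ* ∈ E and every complete set R ⊂ Sat(L) of coset representatives of L in Sat(L) (for instance the lattice points of a half-open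 fundamental zonotope of a basis of L that lie in Sat(L)): ∩_{ρ' ∈ E, ρ' ≠ ρ*} I(ρ') = I(ρ) + ⟨ Σ_{u ∈ R} ρ*(u)^{-1} x^u ⟩. -/
open scoped BigOperators

namespace LaurentBinomial

variable (n : ℕ) (k : Type*) [Field k]

/-- The saturation `Sat(L) = {u ∈ ℤ^n : m • u ∈ L for some integer m ≥ 1}` of a
lattice `L ⊆ ℤ^n`. -/
def sat (L : Submodule ℤ (Fin n → ℤ)) : Submodule ℤ (Fin n → ℤ) where
  carrier := {u | ∃ m : ℕ, 0 < m ∧ (m : ℤ) • u ∈ L}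
  zero_mem' := ⟨1, one_pos, by simp⟩
  add_mem' := by
    rintro a b ⟨m, hm, ha⟩ ⟨m', hm', hb⟩
    refine ⟨m * m', Nat.mul_pos hm hm', ?_⟩
    rw [smul_add]
    refine Submodule.add_mem _ ?_ ?_
    · have h : ((m * m' : ℕ) : ℤ) • a = (m' : ℤ) • ((m : ℤ) • a) := by
        rw [smul_smul]; push_cast; rw [mul_comm]
      rw [h]; exact L.smul_mem _ ha
    · have h : ((m * m' : ℕ) : ℤ) • b = (m : ℤ) • ((m' : ℤ) • b) := by
        rw [smul_smul]; push_cast; ring_nf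
      rw [h]; exact L.smul_mem _ hb
  smul_mem' := by
    rintro c a ⟨m, hm, ha⟩
    exact ⟨m, hm, by rw [smul_comm]; exact L.smul_mem c ha⟩

lemma le_sat (L : Submodule ℤ (Fin n → ℤ)) : L ≤ sat n L :=
  fun u hu => ⟨1, one_pos, by simpa using hu⟩

/-- `τ : H → kˣ` is a partial character (a homomorphism from the additive group `H`
to the multiplicative group `kˣ`). -/
def IsChar (H : Submodule ℤ (Fin n → ℤ)) (τ : ↥H → kˣ) : Prop :=
  ∀ a b : ↥H, τ (a + b) = τ a * τ b

/-- The binomial ideal `I(τ) = ⟨x^u − τ(u) : u ∈ H⟩` in the Laurent polynomial ring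
`k[ℤ^n]` associated to a partial character `τ` on the lattice `H`. -/
noncomputable def charIdeal (H : Submodule ℤ (Fin n → ℤ)) (τ : ↥H → kˣ) :
    Ideal (AddMonoidAlgebra k (Fin n → ℤ)) :=
  Ideal.span {f | ∃ u : ↥H,
    f = AddMonoidAlgebra.single (↑u : Fin n → ℤ) (1 : k) -
      AddMonoidAlgebra.single (0 : Fin n → ℤ) ((τ u : k))}

/-- `ρ'` is a partial character on `Sat(L)` extending `ρ`. -/
def ExtendsChar (L : Submodule ℤ (Fin n → ℤ)) (ρ : ↥L → kˣ)
    (ρ' : ↥(sat n L) → kˣ) : Prop :=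
  IsChar n k (sat n L) ρ' ∧ ∀ u : ↥L, ρ' ⟨↑u, le_sat n L u.2⟩ = ρ u

/-!
Let `S = Sat(L)`, and let `e_χ = ∑_{u ∈ R} χ(u)⁻¹ x^u` for an extension `χ` of `ρ` to `S`. Modulo
`I(ρ)`, the element `e_χ` does not depend on the representatives `R`, and up to the factor
`[S : L]` the `e_χ` are the orthogonal idempotents of the twisted group algebra of `S/L`:
multiplying by `χ(v)⁻¹ x^v` only changes representatives, so `I(χ) e_χ ⊆ I(ρ)`; orthogonality of
the characters of `S/L` gives `e_χ ∈ I(χ')` for `χ' ≠ χ`, and shows that `∑_χ e_χ` is `[S : L]`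
times a monomial, hence a unit. So if `f` lies in every `I(χ)` with `χ ≠ ρ*`, then expanding `f`
along that unit gives `f ∈ I(ρ) + ⟨e_{ρ*}⟩`, and if `f` also lies in `I(ρ*)`, then `f ∈ I(ρ)`.
Finally, `ℤ^n/S` is free, so `χ` extends to a character `X` of `ℤ^n`, and `x^g ↦ X(g) x^(g + S)`
has kernel `I(χ)` and values in the domain `k[ℤ^n/S]`.
-/

section Ideals

variable {A ι : Type*} [CommSemiring A]

lemma ideal_le_of_mul_le {E : ι → Ideal A} (hE : ⨆ i, E i = ⊤) {K T : Ideal A}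
    (h : ∀ i, K * E i ≤ T) : K ≤ T := by
  rw [← Ideal.mul_top K, ← hE, Ideal.mul_iSup]
  exact iSup_le h

variable {J : Ideal A} {I E : ι → Ideal A}

lemma iInf_eq_of_mul_le (hE : ⨆ i, E i = ⊤) (hJI : ∀ i, J ≤ I i) (hIE : ∀ i, I i * E i ≤ J) :
    ⨅ i, I i = J :=
  le_antisymm
    (ideal_le_of_mul_le hE fun i => (Ideal.mul_mono_left (iInf_le I i)).trans (hIE i))
    (le_iInf hJI)

lemma iInf_ne_eq_sup_of_mul_le (hE : ⨆ i, E i = ⊤) (hJI : ∀ i, J ≤ I i)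
    (hIE : ∀ i, I i * E i ≤ J) (hEI : ∀ i j, i ≠ j → E i ≤ I j) (i : ι) :
    ⨅ j ≠ i, I j = J ⊔ E i := by
  apply le_antisymm
  · refine ideal_le_of_mul_le hE fun j => ?_
    obtain rfl | hj := eq_or_ne j i
    · exact Ideal.mul_le_right.trans le_sup_right
    · have hK : ⨅ j ≠ i, I j ≤ I j := iInf₂_le j hj
      exact ((Ideal.mul_mono_left hK).trans (hIE j)).trans le_sup_left
  · exact le_iInf₂ fun j hj => sup_le (hJI j) (hEI i j hj.symm)

end Ideals

section Characters

variable {G M : Type*} [AddCommGroup G] {L S : AddSubgroup G}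

/-- The restriction of a character along an inclusion `L ≤ S`. -/
def restrict [Monoid M] (hLS : L ≤ S) (χ : AddChar S M) : AddChar L M :=
  χ.compAddMonoidHom (AddSubgroup.inclusion hLS)

/-- The character of `S` obtained from a character of `S/L` by composing with `S → S/L`. -/
def inflate [Monoid M] (ψ : AddChar (S ⧸ L.addSubgroupOf S) M) : AddChar S M :=
  ψ.compAddMonoidHom (QuotientAddGroup.mk' (L.addSubgroupOf S))

lemma restrict_apply [Monoid M] (hLS : L ≤ S) (χ : AddChar S M) (u : L) :
    restrict hLS χ u = χ ⟨u, hLS u.2⟩ := rfl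

lemma inflate_apply [Monoid M] (ψ : AddChar (S ⧸ L.addSubgroupOf S) M) (u : S) :
    inflate ψ u = ψ u := rfl

lemma restrict_mul_inflate [CommMonoid M] (hLS : L ≤ S) (χ : AddChar S M)
    (ψ : AddChar (S ⧸ L.addSubgroupOf S) M) : restrict hLS (χ * inflate ψ) = restrict hLS χ := by
  ext u
  have hu : ((⟨u, hLS u.2⟩ : S) : S ⧸ L.addSubgroupOf S) = 0 :=
    (QuotientAddGroup.eq_zero_iff _).mpr u.2
  rw [restrict_apply, AddChar.mul_apply, inflate_apply, hu, AddChar.map_zero_eq_one, mul_one,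
    restrict_apply]

lemma exists_eq_mul_inflate [CommGroup M] (hLS : L ≤ S) {χ χ' : AddChar S M}
    (h : restrict hLS χ = restrict hLS χ') :
    ∃ ψ : AddChar (S ⧸ L.addSubgroupOf S) M, χ' = χ * inflate ψ := by
  have hker : L.addSubgroupOf S ≤ (χ' / χ).toAddMonoidHom.ker := fun u hu => by
    have hu' : χ u = χ' u := DFunLike.congr_fun h ⟨u, hu⟩
    rw [AddMonoidHom.mem_ker, AddChar.toAddMonoidHom_apply, AddChar.div_apply', hu', div_self',
      ofMul_one]
  refine ⟨AddChar.toAddMonoidHomEquiv.symm (QuotientAddGroup.lift _ _ hker), ?_⟩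
  ext u
  exact (mul_div_cancel (χ u) (χ' u)).symm.trans
    (congrArg (χ u * ·) (AddChar.div_apply' χ' χ u).symm)

lemma finite_restrict_eq [CommGroup M] [Finite (AddChar (S ⧸ L.addSubgroupOf S) M)]
    (hLS : L ≤ S) (ρ : AddChar L M) : Finite {χ : AddChar S M // restrict hLS χ = ρ} := by
  obtain _ | ⟨χ, rfl⟩ := isEmpty_or_nonempty {χ : AddChar S M // restrict hLS χ = ρ}
  · infer_instance
  · refine Finite.of_surjective (fun ψ => ⟨χ * inflate ψ, restrict_mul_inflate hLS χ ψ⟩) ?_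
    rintro ⟨χ', h⟩
    obtain ⟨ψ, rfl⟩ := exists_eq_mul_inflate hLS h.symm
    exact ⟨ψ, rfl⟩

end Characters

section CharacterExtension

variable {G H k M : Type*} [AddCommGroup G] [AddCommGroup H] [Field k]

lemma units_pow_surjective [IsAlgClosed k] {m : ℕ} (hm : m ≠ 0) :
    Function.Surjective fun a : kˣ => a ^ m := fun a => by
  obtain ⟨z, hz⟩ := IsAlgClosed.exists_pow_nat_eq (a : k) (Nat.pos_of_ne_zero hm)
  have hz0 : z ≠ 0 := by
    rintro rfl
    exact a.ne_zero (by rw [← hz, zero_pow hm])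
  exact ⟨Units.mk0 z hz0, Units.ext hz⟩

lemma exists_compAddMonoidHom_eq [IsAlgClosed k] {i : H →+ G} (hi : Function.Injective i)
    (ρ : AddChar H kˣ) : ∃ χ : AddChar G kˣ, χ.compAddMonoidHom i = ρ := by
  let _ : DivisibleBy (Additive kˣ) ℤ :=
    let _ := divisibleByOfSMulRightSurj (Additive kˣ) ℕ fun hm => units_pow_surjective hm
    AddGroup.divisibleByIntOfDivisibleByNat _
  obtain ⟨χ, hχ⟩ := (Module.Baer.of_divisible (Additive kˣ)).extension_property_addMonoidHom
    i hi ρ.toAddMonoidHom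
  exact ⟨AddChar.toAddMonoidHomEquiv.symm χ, AddChar.toAddMonoidHomEquiv.injective hχ⟩

lemma exists_compAddMonoidHom_subtype_eq {R : Type*} [Ring R] [Module R G] [Monoid M]
    {S : Submodule R G} [Module.Projective R (G ⧸ S)] (χ : AddChar S M) :
    ∃ X : AddChar G M, X.compAddMonoidHom S.subtype.toAddMonoidHom = χ := by
  have hsplit : ∃ f : (G ⧸ S) →ₗ[R] G, S.mkQ ∘ₗ f = LinearMap.id :=
    Module.projective_lifting_property _ _ S.mkQ_surjective
  obtain ⟨π, hπ⟩ := ((Function.Exact.split_tfae (LinearMap.exact_subtype_mkQ S)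
    S.subtype_injective S.mkQ_surjective).out 0 1).mp hsplit
  refine ⟨χ.compAddMonoidHom π.toAddMonoidHom, DFunLike.ext _ _ fun u => ?_⟩
  exact congrArg χ (LinearMap.congr_fun hπ u)

end CharacterExtension

section Orthogonality

lemma sum_addChar_units_eq_zero {A R : Type*} [AddGroup A] [Fintype A] [CommRing R] [IsDomain R]
    {ψ : AddChar A Rˣ} (hψ : ψ ≠ 1) : ∑ a, (ψ a : R) = 0 := by
  classical
  have hψ' : (Units.coeHom R).compAddChar ψ ≠ 0 := fun h =>
    hψ (MonoidHom.compAddChar_injective_right _ Units.val_injective h)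
  exact ((Units.coeHom R).compAddChar ψ).sum_eq_ite.trans (if_neg hψ')

variable {Q R : Type*} [AddCommGroup Q] [Finite Q] [CommRing R]
  [HasEnoughRootsOfUnity R (AddMonoid.exponent Q)]

instance finite_addChar_units : Finite (AddChar Q Rˣ) :=
  have : HasEnoughRootsOfUnity R (Monoid.exponent (Multiplicative Q)) := by
    rwa [Monoid.exponent_multiplicative]
  .of_equiv _ AddChar.toMonoidHomEquiv.symm

lemma exists_addChar_units_apply_ne_one {q : Q} (hq : q ≠ 0) : ∃ ψ : AddChar Q Rˣ, ψ q ≠ 1 := by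
  have : HasEnoughRootsOfUnity R (Monoid.exponent (Multiplicative Q)) := by
    rwa [Monoid.exponent_multiplicative]
  obtain ⟨φ, hφ⟩ := CommGroup.exists_apply_ne_one_of_hasEnoughRootsOfUnity (Multiplicative Q) R
    (a := .ofAdd q) (by simpa using hq)
  exact ⟨AddChar.toMonoidHomEquiv.symm φ, hφ⟩

lemma sum_addChar_units_apply_eq_zero [IsDomain R] [Fintype (AddChar Q Rˣ)] {q : Q} (hq : q ≠ 0) :
    ∑ ψ : AddChar Q Rˣ, (ψ q : R) = 0 := by
  obtain ⟨φ, hφ⟩ := exists_addChar_units_apply_ne_one (R := R) hq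
  exact sum_addChar_units_eq_zero (A := AddChar Q Rˣ) (ψ := AddChar.doubleDualEmb q)
    fun h => hφ (DFunLike.congr_fun h φ)

variable (Q R) in
lemma natCard_addChar_units : Nat.card (AddChar Q Rˣ) = Nat.card Q := by
  have : HasEnoughRootsOfUnity R (Monoid.exponent (Multiplicative Q)) := by
    rwa [Monoid.exponent_multiplicative]
  exact (Nat.card_congr AddChar.toMonoidHomEquiv).trans
    (CommGroup.card_monoidHom_of_hasEnoughRootsOfUnity (Multiplicative Q) R)

variable (Q R) in
lemma natCast_natCard_ne_zero [IsDomain R] : (Nat.card Q : R) ≠ 0 := by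
  obtain ⟨ζ, hζ⟩ := HasEnoughRootsOfUnity.exists_primitiveRoot R (AddMonoid.exponent Q)
  have : NeZero (AddMonoid.exponent Q) := ⟨AddMonoid.exponent_ne_zero_of_finite⟩
  have hexp : NeZero (AddMonoid.exponent Q : R) := hζ.neZero'
  obtain ⟨c, hc⟩ := card_dvd_exponent_pow_rank (Multiplicative Q)
  have h := congrArg (Nat.cast : ℕ → R) hc
  rw [Monoid.exponent_multiplicative, Nat.cast_pow, Nat.cast_mul] at h
  exact left_ne_zero_of_mul (h ▸ pow_ne_zero _ hexp.out)

lemma hasEnoughRootsOfUnity_exponent {k Q : Type*} [Field k] [IsSepClosed k] [AddGroup Q]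
    [Finite Q] (hchar : ringChar k = 0 ∨ ¬ ringChar k ∣ Nat.card Q) :
    HasEnoughRootsOfUnity k (AddMonoid.exponent Q) := by
  have hexp : NeZero (AddMonoid.exponent Q : k) := by
    refine ⟨fun h => ?_⟩
    have hdvd : ringChar k ∣ Nat.card Q := (ringChar.dvd h).trans AddGroup.exponent_dvd_nat_card
    obtain h0 | hndvd := hchar
    · exact Nat.card_pos.ne' (zero_dvd_iff.mp (h0 ▸ hdvd))
    · exact hndvd hdvd
  infer_instance

end Orthogonality

section BinomialIdeals

open AddMonoidAlgebra

variable {G R : Type*} [AddCommGroup G] [CommRing R] {H : AddSubgroup G}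

/-- The ideal `I(χ) = ⟨x^u - χ(u) : u ∈ H⟩` of the group algebra `R[G]` associated with a character
`χ` of a subgroup `H` of `G`, generalizing `charIdeal`. -/
noncomputable def binomialIdeal (χ : AddChar H Rˣ) : Ideal (AddMonoidAlgebra R G) :=
  Ideal.span {f | ∃ u : H, f = single (u : G) (1 : R) - single (0 : G) (χ u : R)}

/-- The monomials `χ(u)⁻¹ x^u` with `u ∈ H`, bundled as a multiplicative map `u ↦ χ(u)⁻¹ x^u`. They
are the monomials with exponent in `H` that are congruent to `1` modulo `I(χ)`. -/
noncomputable def monicMonomial (χ : AddChar H Rˣ) : AddChar H (AddMonoidAlgebra R G) where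
  toFun u := single (u : G) ((χ u)⁻¹ : Rˣ)
  map_zero_eq_one' := by
    rw [AddChar.map_zero_eq_one, inv_one, Units.val_one, ZeroMemClass.coe_zero, one_def]
  map_add_eq_mul' u v := by
    rw [AddChar.map_add_eq_mul, mul_inv, Units.val_mul, AddSubgroup.coe_add, single_mul_single]

lemma monicMonomial_apply (χ : AddChar H Rˣ) (u : H) :
    monicMonomial χ u = single (u : G) (((χ u)⁻¹ : Rˣ) : R) := rfl

lemma smul_monicMonomial_sub_one (χ : AddChar H Rˣ) (u : H) :
    (χ u : R) • (monicMonomial χ u - 1) = single (u : G) 1 - single 0 (χ u : R) := by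
  rw [smul_sub, monicMonomial_apply, one_def, smul_single, smul_single, smul_eq_mul, smul_eq_mul,
    Units.mul_inv, mul_one]

lemma single_add_sub_mem_binomialIdeal (χ : AddChar H Rˣ) (g : G) (u : H) (c : R) :
    single (g + u) c - single g (c * χ u) ∈ binomialIdeal χ := by
  have h : single (u : G) 1 - single 0 (χ u : R) ∈ binomialIdeal χ := Ideal.subset_span ⟨u, rfl⟩
  simpa only [mul_sub, single_mul_single, mul_one, add_zero] using
    Ideal.mul_mem_left _ (single g c) h

lemma monicMonomial_sub_one_mem (χ : AddChar H Rˣ) (u : H) :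
    monicMonomial χ u - 1 ∈ binomialIdeal χ := by
  simpa only [monicMonomial_apply, one_def, zero_add, Units.inv_mul] using
    single_add_sub_mem_binomialIdeal χ 0 u ((χ u)⁻¹ : Rˣ)

lemma binomialIdeal_le_iff {χ : AddChar H Rˣ} {J : Ideal (AddMonoidAlgebra R G)} :
    binomialIdeal χ ≤ J ↔ ∀ u, monicMonomial χ u - 1 ∈ J := by
  refine ⟨fun h u => h (monicMonomial_sub_one_mem χ u), fun h => Ideal.span_le.mpr ?_⟩
  rintro _ ⟨u, rfl⟩
  rw [← smul_monicMonomial_sub_one]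
  exact Submodule.smul_of_tower_mem J _ (h u)

/-- The algebra homomorphism `R[G] → R[G/H]`, `x^g ↦ X(g) x^{g + H}`, for a character `X` of `G`. -/
noncomputable def twistedMk (H : AddSubgroup G) (X : AddChar G Rˣ) :
    AddMonoidAlgebra R G →ₐ[R] AddMonoidAlgebra R (G ⧸ H) :=
  AddMonoidAlgebra.lift R _ _
    { toFun := fun g => single (g.toAdd : G ⧸ H) (X g.toAdd : R)
      map_one' := by
        rw [toAdd_one, AddChar.map_zero_eq_one, Units.val_one, QuotientAddGroup.mk_zero, one_def]
      map_mul' := fun g h => by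
        rw [toAdd_mul, AddChar.map_add_eq_mul, Units.val_mul, QuotientAddGroup.mk_add,
          single_mul_single] }

lemma twistedMk_single (X : AddChar G Rˣ) (g : G) (c : R) :
    twistedMk H X (single g c) = single (g : G ⧸ H) (c * X g) := by
  rw [twistedMk, lift_single, MonoidHom.coe_mk, OneHom.coe_mk, smul_single, smul_eq_mul,
    toAdd_ofAdd]

lemma ker_twistedMk (X : AddChar G Rˣ) :
    RingHom.ker (twistedMk H X) = binomialIdeal (X.compAddMonoidHom H.subtype) := by
  set I := binomialIdeal (X.compAddMonoidHom H.subtype)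
  -- `s` is an additive section of `twistedMk H X`, and its inverse modulo `I`.
  let s : AddMonoidAlgebra R (G ⧸ H) →+ AddMonoidAlgebra R G :=
    liftNC (singleAddHom 0) fun q => single q.toAdd.out ((X q.toAdd.out)⁻¹ : Rˣ)
  have hs (f : AddMonoidAlgebra R G) : s (twistedMk H X f) - f ∈ I := by
    induction f using AddMonoidAlgebra.induction_linear with
    | zero => rw [map_zero, map_zero, sub_zero]; exact I.zero_mem
    | add f g hf hg =>
      rw [map_add, map_add, add_sub_add_comm]
      exact I.add_mem hf hg
    | single g c =>
      obtain ⟨u, hu⟩ := QuotientAddGroup.mk_out_eq_add H g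
      rw [twistedMk_single, liftNC_single]
      change single 0 (c * X g) * single (g : G ⧸ H).out (((X (g : G ⧸ H).out)⁻¹ : Rˣ) : R) - _ ∈ I
      rw [single_mul_single, zero_add, hu]
      have hc : c * X g * ((X (g + u))⁻¹ : Rˣ) * X u = c := by
        rw [mul_right_comm, mul_assoc c, ← Units.val_mul, ← AddChar.map_add_eq_mul,
          Units.mul_inv_cancel_right]
      simpa only [AddChar.compAddMonoidHom_apply, AddSubgroup.subtype_apply, hc] using
        single_add_sub_mem_binomialIdeal (X.compAddMonoidHom H.subtype) g u
          (c * X g * ((X (g + u))⁻¹ : Rˣ))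
  refine le_antisymm (fun f hf => ?_) (binomialIdeal_le_iff.mpr fun u => ?_)
  · have h := hs f
    rw [RingHom.mem_ker] at hf
    rw [hf, map_zero, zero_sub] at h
    exact neg_mem_iff.mp h
  · rw [RingHom.mem_ker, map_sub, map_one, monicMonomial_apply, twistedMk_single,
      (QuotientAddGroup.eq_zero_iff _).mpr u.2]
    simp [one_def]

lemma isPrime_binomialIdeal [IsDomain R] [UniqueSums (G ⧸ H)] (X : AddChar G Rˣ) :
    (binomialIdeal (X.compAddMonoidHom H.subtype)).IsPrime := by
  have : IsDomain (AddMonoidAlgebra R (G ⧸ H)) := NoZeroDivisors.to_isDomain _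
  rw [← ker_twistedMk]
  exact RingHom.ker_isPrime _

end BinomialIdeals

section CosetSums

open AddMonoidAlgebra

variable {G R ι : Type*} [AddCommGroup G] [CommRing R] [Fintype ι] {L S : AddSubgroup G}

/-- The sum `Σᵢ χ(rᵢ)⁻¹ x^(rᵢ)` attached to a family `r` in `S`, which is used for systems `r` of
representatives of `S/L`. -/
noncomputable def cosetSum (r : ι → S) (χ : AddChar S Rˣ) : AddMonoidAlgebra R G :=
  ∑ i, monicMonomial χ (r i)

lemma binomialIdeal_restrict_le (hLS : L ≤ S) (χ : AddChar S Rˣ) :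
    binomialIdeal (restrict hLS χ) ≤ binomialIdeal χ :=
  binomialIdeal_le_iff.mpr fun u => monicMonomial_sub_one_mem χ ⟨u, hLS u.2⟩

lemma monicMonomial_sub_mem (hLS : L ≤ S) (χ : AddChar S Rˣ) {u v : S}
    (huv : (u : S ⧸ L.addSubgroupOf S) = v) :
    monicMonomial χ u - monicMonomial χ v ∈ binomialIdeal (restrict hLS χ) := by
  have hl : -v + u ∈ L.addSubgroupOf S := QuotientAddGroup.eq.mp huv.symm
  have h : monicMonomial χ (-v + u) - 1 ∈ binomialIdeal (restrict hLS χ) :=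
    monicMonomial_sub_one_mem (restrict hLS χ) ⟨_, hl⟩
  simpa only [mul_sub, mul_one, ← AddChar.map_add_eq_mul, add_neg_cancel_left] using
    Ideal.mul_mem_left _ (monicMonomial χ v) h

lemma monicMonomial_mul_inflate (χ : AddChar S Rˣ) (ψ : AddChar (S ⧸ L.addSubgroupOf S) Rˣ)
    (u : S) : monicMonomial (χ * inflate ψ) u = (ψ⁻¹ u : R) • monicMonomial χ u := by
  rw [monicMonomial_apply, monicMonomial_apply, AddChar.mul_apply, mul_inv_rev, Units.val_mul,
    inflate_apply, smul_single, smul_eq_mul, AddChar.inv_apply']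

variable {r : ι → S}

lemma monicMonomial_sub_one_mul_cosetSum_mem (hLS : L ≤ S)
    (hr : Function.Bijective fun i => (r i : S ⧸ L.addSubgroupOf S)) (χ : AddChar S Rˣ) (v : S) :
    (monicMonomial χ v - 1) * cosetSum r χ ∈ binomialIdeal (restrict hLS χ) := by
  let e := Equiv.ofBijective _ hr
  let σ : ι ≃ ι := (e.trans (Equiv.addLeft (v : S ⧸ L.addSubgroupOf S))).trans e.symm
  have hσ (i : ι) : ((v + r i : S) : S ⧸ L.addSubgroupOf S) = r (σ i) :=
    (e.apply_symm_apply _).symm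
  have hsum : (monicMonomial χ v - 1) * cosetSum r χ =
      ∑ i, (monicMonomial χ (v + r i) - monicMonomial χ (r (σ i))) := by
    rw [sub_mul, one_mul, cosetSum, Finset.mul_sum, Finset.sum_sub_distrib,
      Equiv.sum_comp σ fun i => monicMonomial χ (r i)]
    simp only [AddChar.map_add_eq_mul]
  rw [hsum]
  exact Ideal.sum_mem _ fun i _ => monicMonomial_sub_mem hLS χ (hσ i)

lemma binomialIdeal_mul_span_cosetSum_le (hLS : L ≤ S)
    (hr : Function.Bijective fun i => (r i : S ⧸ L.addSubgroupOf S)) (χ : AddChar S Rˣ) :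
    binomialIdeal χ * Ideal.span {cosetSum r χ} ≤ binomialIdeal (restrict hLS χ) := by
  have hcolon : binomialIdeal χ ≤ (binomialIdeal (restrict hLS χ)).colon {cosetSum r χ} :=
    binomialIdeal_le_iff.mpr fun v => Submodule.mem_colon_singleton.mpr
      (monicMonomial_sub_one_mul_cosetSum_mem hLS hr χ v)
  refine Ideal.mul_le.mpr fun f hf g hg => ?_
  obtain ⟨a, rfl⟩ := Ideal.mem_span_singleton'.mp hg
  rw [mul_left_comm]
  exact Ideal.mul_mem_left _ a (Submodule.mem_colon_singleton.mp (hcolon hf))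

lemma cosetSum_mem_binomialIdeal [IsDomain R] (hLS : L ≤ S)
    (hr : Function.Bijective fun i => (r i : S ⧸ L.addSubgroupOf S)) {χ χ' : AddChar S Rˣ}
    (hres : restrict hLS χ = restrict hLS χ') (hne : χ ≠ χ') :
    cosetSum r χ ∈ binomialIdeal χ' := by
  obtain ⟨ψ, rfl⟩ := exists_eq_mul_inflate hLS hres.symm
  have hψ : ψ⁻¹ ≠ 1 := by
    rintro h
    obtain rfl := inv_eq_one.mp h
    exact hne (mul_one χ')
  have := Fintype.ofBijective _ hr
  have hsum : ∑ i, (ψ⁻¹ (r i) : R) = 0 :=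
    (hr.sum_comp fun q => (ψ⁻¹ q : R)).trans (sum_addChar_units_eq_zero hψ)
  have hcos : cosetSum r (χ' * inflate ψ) =
      ∑ i, (ψ⁻¹ (r i) : R) • (monicMonomial χ' (r i) - 1) := by
    simp only [cosetSum, monicMonomial_mul_inflate, smul_sub, Finset.sum_sub_distrib,
      ← Finset.sum_smul, hsum, zero_smul, sub_zero]
  rw [hcos]
  exact Ideal.sum_mem _ fun i _ =>
    Submodule.smul_of_tower_mem _ _ (monicMonomial_sub_one_mem χ' (r i))

lemma sum_cosetSum_mul_inflate [IsDomain R]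
    [HasEnoughRootsOfUnity R (AddMonoid.exponent (S ⧸ L.addSubgroupOf S))]
    [Fintype (AddChar (S ⧸ L.addSubgroupOf S) Rˣ)]
    (hr : Function.Bijective fun i => (r i : S ⧸ L.addSubgroupOf S)) (χ : AddChar S Rˣ) {i₀ : ι}
    (hi₀ : (r i₀ : S ⧸ L.addSubgroupOf S) = 0) :
    ∑ ψ : AddChar (S ⧸ L.addSubgroupOf S) Rˣ, cosetSum r (χ * inflate ψ) =
      (Nat.card (S ⧸ L.addSubgroupOf S) : R) • monicMonomial χ (r i₀) := by
  have : Finite (S ⧸ L.addSubgroupOf S) := .of_surjective _ hr.2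
  have hinv (i : ι) : ∑ ψ : AddChar (S ⧸ L.addSubgroupOf S) Rˣ, (ψ⁻¹ (r i) : R) =
      ∑ ψ : AddChar (S ⧸ L.addSubgroupOf S) Rˣ, (ψ (r i) : R) :=
    Equiv.sum_comp (Equiv.inv _) fun ψ : AddChar (S ⧸ L.addSubgroupOf S) Rˣ => (ψ (r i) : R)
  simp only [cosetSum, monicMonomial_mul_inflate]
  rw [Finset.sum_comm]
  simp only [← Finset.sum_smul, hinv]
  rw [Fintype.sum_eq_single i₀]
  · simp only [hi₀, AddChar.map_zero_eq_one, Units.val_one, Finset.sum_const, Finset.card_univ,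
      nsmul_eq_mul, mul_one, ← Nat.card_eq_fintype_card, natCard_addChar_units]
  · intro i hi
    have hri : (r i : S ⧸ L.addSubgroupOf S) ≠ 0 := fun h => hi (hr.1 (h.trans hi₀.symm))
    rw [sum_addChar_units_apply_eq_zero hri, zero_smul]

variable {k : Type*} [Field k]
  [HasEnoughRootsOfUnity k (AddMonoid.exponent (S ⧸ L.addSubgroupOf S))]

lemma iSup_span_cosetSum_eq_top (hLS : L ≤ S)
    (hr : Function.Bijective fun i => (r i : S ⧸ L.addSubgroupOf S)) (χ₀ : AddChar S kˣ) :
    ⨆ χ : {χ : AddChar S kˣ // restrict hLS χ = restrict hLS χ₀},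
      Ideal.span {cosetSum r χ.1} = ⊤ := by
  have : Finite (S ⧸ L.addSubgroupOf S) := .of_surjective _ hr.2
  have := Fintype.ofFinite (AddChar (S ⧸ L.addSubgroupOf S) kˣ)
  obtain ⟨i₀, hi₀⟩ := hr.2 0
  have hunit : IsUnit ((Nat.card (S ⧸ L.addSubgroupOf S) : k) • monicMonomial χ₀ (r i₀)) :=
    (AddChar.val_isUnit _ _).smul (Units.mk0 _ (natCast_natCard_ne_zero _ k))
  refine Ideal.eq_top_of_isUnit_mem _ ?_ hunit
  rw [← sum_cosetSum_mul_inflate hr χ₀ hi₀]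
  refine Ideal.sum_mem _ fun ψ _ => ?_
  have hle := le_iSup (fun χ : {χ : AddChar S kˣ // restrict hLS χ = restrict hLS χ₀} =>
    Ideal.span {cosetSum r χ.1}) ⟨χ₀ * inflate ψ, restrict_mul_inflate hLS χ₀ ψ⟩
  exact hle (Ideal.mem_span_singleton_self _)

theorem iInf_binomialIdeal_eq [Finite (S ⧸ L.addSubgroupOf S)] (hLS : L ≤ S)
    (χ₀ : AddChar S kˣ) :
    ⨅ χ : {χ : AddChar S kˣ // restrict hLS χ = restrict hLS χ₀}, binomialIdeal χ.1 =
      binomialIdeal (restrict hLS χ₀) := by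
  have := Fintype.ofFinite (S ⧸ L.addSubgroupOf S)
  have hr : Function.Bijective
      fun q : S ⧸ L.addSubgroupOf S => (q.out : S ⧸ L.addSubgroupOf S) := by
    simpa only [QuotientAddGroup.out_eq'] using! Function.bijective_id
  exact iInf_eq_of_mul_le (iSup_span_cosetSum_eq_top hLS hr χ₀)
    (fun χ => (congrArg binomialIdeal χ.2).ge.trans (binomialIdeal_restrict_le hLS χ.1))
    (fun χ => (binomialIdeal_mul_span_cosetSum_le hLS hr χ.1).trans_eq (congrArg _ χ.2))

theorem iInf_ne_binomialIdeal_eq (hLS : L ≤ S)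
    (hr : Function.Bijective fun i => (r i : S ⧸ L.addSubgroupOf S)) (χ₀ : AddChar S kˣ) :
    ⨅ χ : {χ : AddChar S kˣ // restrict hLS χ = restrict hLS χ₀ ∧ χ ≠ χ₀}, binomialIdeal χ.1 =
      binomialIdeal (restrict hLS χ₀) ⊔ Ideal.span {cosetSum r χ₀} := by
  have h := iInf_ne_eq_sup_of_mul_le (iSup_span_cosetSum_eq_top hLS hr χ₀)
    (fun χ => (congrArg binomialIdeal χ.2).ge.trans (binomialIdeal_restrict_le hLS χ.1))
    (fun χ => (binomialIdeal_mul_span_cosetSum_le hLS hr χ.1).trans_eq (congrArg _ χ.2))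
    (fun χ χ' hne => (Ideal.span_singleton_le_iff_mem _).mpr <| cosetSum_mem_binomialIdeal hLS hr
      (χ.2.trans χ'.2.symm) (Subtype.val_injective.ne hne))
    ⟨χ₀, rfl⟩
  simpa only [iInf_subtype, iInf_and, ne_eq, Subtype.mk.injEq] using h

end CosetSums

section Lattices

variable {n : ℕ} {k : Type*} [Field k] {H L : Submodule ℤ (Fin n → ℤ)}

/-- A partial character on `H` as a bundled character of the additive group `H`. -/
def IsChar.addChar {τ : H → kˣ} (hτ : IsChar n k H τ) : AddChar H.toAddSubgroup kˣ where
  toFun := τ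
  map_zero_eq_one' := by
    have h := hτ 0 0
    rwa [add_zero, left_eq_mul] at h
  map_add_eq_mul' := hτ

lemma isPrime_charIdeal [IsAddTorsionFree ((Fin n → ℤ) ⧸ H)] {τ : H → kˣ}
    (hτ : IsChar n k H τ) : (charIdeal n k H τ).IsPrime := by
  have : AddMonoid.FG ((Fin n → ℤ) ⧸ H) := by
    rw [← AddGroup.fg_iff_addMonoid_fg, ← Module.Finite.iff_addGroup_fg]
    infer_instance
  have : UniqueSums ((Fin n → ℤ) ⧸ H.toAddSubgroup) :=
    inferInstanceAs (UniqueSums ((Fin n → ℤ) ⧸ H))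
  obtain ⟨X, hX⟩ := exists_compAddMonoidHom_subtype_eq hτ.addChar
  have hprime := isPrime_binomialIdeal (H := H.toAddSubgroup) X
  rwa [show X.compAddMonoidHom H.toAddSubgroup.subtype = hτ.addChar from hX] at hprime

instance isAddTorsionFree_quotient_sat : IsAddTorsionFree ((Fin n → ℤ) ⧸ sat n L) := by
  refine ⟨fun m hm a b hab => ?_⟩
  obtain ⟨u, rfl⟩ := Submodule.Quotient.mk_surjective _ a
  obtain ⟨v, rfl⟩ := Submodule.Quotient.mk_surjective _ b
  obtain ⟨m', hm', h⟩ : m • u - m • v ∈ sat n L := (Submodule.Quotient.eq _).mp hab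
  refine (Submodule.Quotient.eq _).mpr ⟨m' * m, Nat.mul_pos hm' (Nat.pos_of_ne_zero hm), ?_⟩
  rwa [Nat.cast_mul, mul_smul, natCast_zsmul (n := m), smul_sub]

instance finite_sat_quotient : Finite (sat n L ⧸ L.comap (sat n L).subtype) := by
  refine Module.finite_of_fg_torsion _ fun x => ?_
  obtain ⟨⟨u, m, hm, hu⟩, rfl⟩ := Submodule.Quotient.mk_surjective _ x
  refine ⟨⟨m, mem_nonZeroDivisors_of_ne_zero (Nat.cast_ne_zero.mpr hm.ne')⟩, ?_⟩
  exact (Submodule.Quotient.mk_eq_zero _).mpr hu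

instance finite_toAddSubgroup_sat_quotient :
    Finite ((sat n L).toAddSubgroup ⧸ L.toAddSubgroup.addSubgroupOf (sat n L).toAddSubgroup) :=
  finite_sat_quotient

lemma toAddSubgroup_le_sat : L.toAddSubgroup ≤ (sat n L).toAddSubgroup := le_sat n L

lemma bijective_mk_of_existsUnique {Rs : Finset (Fin n → ℤ)} (hRs : ∀ r ∈ Rs, r ∈ sat n L)
    (hR : ∀ v ∈ sat n L, ∃! r, r ∈ Rs ∧ v - r ∈ L) :
    Function.Bijective fun u : Rs =>
      ((⟨u, hRs u u.2⟩ : (sat n L).toAddSubgroup) :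
        (sat n L).toAddSubgroup ⧸ L.toAddSubgroup.addSubgroupOf (sat n L).toAddSubgroup) := by
  refine ⟨fun u v huv => Subtype.ext ?_, fun q => ?_⟩
  · have huv' : -(v : Fin n → ℤ) + u ∈ L := QuotientAddGroup.eq.mp huv.symm
    exact (hR u (hRs u u.2)).unique ⟨u.2, by simp⟩ ⟨v.2, by rwa [sub_eq_neg_add]⟩
  · obtain ⟨v, rfl⟩ := QuotientAddGroup.mk_surjective q
    obtain ⟨r, ⟨hr, hvr⟩, -⟩ := hR v v.2
    rw [sub_eq_neg_add] at hvr
    exact ⟨⟨r, hr⟩, QuotientAddGroup.eq.mpr hvr⟩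

variable {ρ : L → kˣ} {ρ₀ : sat n L → kˣ}

lemma extendsChar_iff_restrict_eq (h₀ : ExtendsChar n k L ρ ρ₀)
    (χ : AddChar (sat n L).toAddSubgroup kˣ) :
    ExtendsChar n k L ρ χ ↔
      restrict toAddSubgroup_le_sat χ = restrict toAddSubgroup_le_sat h₀.1.addChar :=
  ⟨fun h => DFunLike.ext _ _ fun u => (h.2 u).trans (h₀.2 u).symm,
    fun h => ⟨χ.map_add_eq_mul, fun u => (DFunLike.congr_fun h u).trans (h₀.2 u)⟩⟩

/-- The extensions of `ρ` to `Sat(L)`, as bundled characters. Given one extension `ρ₀`, they are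
the characters with the same restriction to `L` as `ρ₀`. -/
def extensionEquiv (h₀ : ExtendsChar n k L ρ ρ₀) :
    {ρ' : sat n L → kˣ // ExtendsChar n k L ρ ρ'} ≃
      {χ : AddChar (sat n L).toAddSubgroup kˣ //
        restrict toAddSubgroup_le_sat χ = restrict toAddSubgroup_le_sat h₀.1.addChar} where
  toFun ρ' := ⟨ρ'.2.1.addChar, (extendsChar_iff_restrict_eq h₀ _).mp ρ'.2⟩
  invFun χ := ⟨χ.1, (extendsChar_iff_restrict_eq h₀ _).mpr χ.2⟩
  left_inv _ := rfl
  right_inv _ := rfl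

lemma exists_extendsChar [IsAlgClosed k] (hρ : IsChar n k L ρ) :
    ∃ ρ', ExtendsChar n k L ρ ρ' := by
  obtain ⟨χ, hχ⟩ := exists_compAddMonoidHom_eq
    (AddSubgroup.inclusion_injective toAddSubgroup_le_sat) hρ.addChar
  exact ⟨χ, χ.map_add_eq_mul, DFunLike.congr_fun hχ⟩

lemma charIdeal_eq_binomialIdeal_restrict (h₀ : ExtendsChar n k L ρ ρ₀) :
    charIdeal n k L ρ = binomialIdeal (restrict toAddSubgroup_le_sat h₀.1.addChar) := by
  obtain rfl : (fun u : L => ρ₀ ⟨u, le_sat n L u.2⟩) = ρ := funext h₀.2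
  rfl

section EnoughRoots

variable [HasEnoughRootsOfUnity k (AddMonoid.exponent
  ((sat n L).toAddSubgroup ⧸ L.toAddSubgroup.addSubgroupOf (sat n L).toAddSubgroup))]

lemma finite_extendsChar (h₀ : ExtendsChar n k L ρ ρ₀) :
    Finite {ρ' : sat n L → kˣ // ExtendsChar n k L ρ ρ'} := by
  have := finite_restrict_eq toAddSubgroup_le_sat (restrict toAddSubgroup_le_sat h₀.1.addChar)
  exact .of_equiv _ (extensionEquiv h₀).symm

lemma charIdeal_eq_iInf (h₀ : ExtendsChar n k L ρ ρ₀) :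
    charIdeal n k L ρ = ⨅ ρ' : {ρ' : sat n L → kˣ // ExtendsChar n k L ρ ρ'},
      charIdeal n k (sat n L) ρ'.1 := by
  rw [charIdeal_eq_binomialIdeal_restrict h₀, ← iInf_binomialIdeal_eq]
  exact ((extensionEquiv h₀).iInf_congr fun _ => rfl).symm

lemma iInf_ne_charIdeal_eq (h₀ : ExtendsChar n k L ρ ρ₀) {Rs : Finset (Fin n → ℤ)}
    (hRs : ∀ r ∈ Rs, r ∈ sat n L) (hR : ∀ v ∈ sat n L, ∃! r, r ∈ Rs ∧ v - r ∈ L) :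
    (⨅ ρ' : {ρ' : sat n L → kˣ // ExtendsChar n k L ρ ρ' ∧ ρ' ≠ ρ₀},
      charIdeal n k (sat n L) ρ'.1) =
      charIdeal n k L ρ ⊔ Ideal.span {∑ u ∈ Rs.attach,
        AddMonoidAlgebra.single (u : Fin n → ℤ) (((ρ₀ ⟨u, hRs u u.2⟩)⁻¹ : kˣ) : k)} := by
  rw [charIdeal_eq_binomialIdeal_restrict h₀]
  refine Eq.trans ?_ (iInf_ne_binomialIdeal_eq toAddSubgroup_le_sat
    (bijective_mk_of_existsUnique hRs hR) h₀.1.addChar)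
  refine Function.Surjective.iInf_congr (fun ρ' => ⟨ρ'.2.1.1.addChar,
    (extendsChar_iff_restrict_eq h₀ _).mp ρ'.2.1, fun h => ρ'.2.2 (congrArg (⇑) h)⟩) ?_
    fun _ => rfl
  rintro ⟨χ, hχ, hne⟩
  exact ⟨⟨χ, (extendsChar_iff_restrict_eq h₀ χ).mpr hχ, DFunLike.coe_injective.ne hne⟩, rfl⟩

end EnoughRoots

end Lattices

theorem laurent_subintersection_general (n : ℕ) (k : Type*) [Field k]
    (L : Submodule ℤ (Fin n → ℤ))
    [HasEnoughRootsOfUnity k (AddMonoid.exponent (↥(sat n L) ⧸ L.comap (sat n L).subtype))]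
    (ρ : ↥L → kˣ) (hρ : ∃ ρ₀ : ↥(sat n L) → kˣ, ExtendsChar n k L ρ ρ₀) :
    (∀ ρ' : ↥(sat n L) → kˣ, ExtendsChar n k L ρ ρ' →
      (charIdeal n k (sat n L) ρ').IsPrime) ∧
    Finite {ρ' : ↥(sat n L) → kˣ // ExtendsChar n k L ρ ρ'} ∧
    (charIdeal n k L ρ =
      ⨅ ρ' : {ρ' : ↥(sat n L) → kˣ // ExtendsChar n k L ρ ρ'},
        charIdeal n k (sat n L) ρ'.val) ∧
    ∀ ρstar : ↥(sat n L) → kˣ, ExtendsChar n k L ρ ρstar →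
      ∀ Rs : Finset (Fin n → ℤ), ∀ hRs : ∀ r ∈ Rs, r ∈ sat n L,
        (∀ v ∈ sat n L, ∃! r, r ∈ Rs ∧ v - r ∈ L) →
        (⨅ ρ' : {ρ' : ↥(sat n L) → kˣ // ExtendsChar n k L ρ ρ' ∧ ρ' ≠ ρstar},
            charIdeal n k (sat n L) ρ'.val) =
          charIdeal n k L ρ + Ideal.span
            {∑ u ∈ Rs.attach,
              AddMonoidAlgebra.single (↑u : Fin n → ℤ)
                (((ρstar ⟨↑u, hRs ↑u u.2⟩)⁻¹ : kˣ) : k)} := by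
  have : HasEnoughRootsOfUnity k (AddMonoid.exponent
      ((sat n L).toAddSubgroup ⧸ L.toAddSubgroup.addSubgroupOf (sat n L).toAddSubgroup)) :=
    ‹HasEnoughRootsOfUnity k _›
  obtain ⟨ρ₀, h₀⟩ := hρ
  exact ⟨fun _ h => isPrime_charIdeal h.1, finite_extendsChar h₀, charIdeal_eq_iInf h₀,
    fun _ hstar _ hRs hR => iInf_ne_charIdeal_eq hstar hRs hR⟩

/-- Over an algebraically closed field whose characteristic does not
divide the index `[Sat(L) : L]`, the ideal `I(ρ)` is the intersection of the prime
ideals `I(ρ')` over the finitely many extensions `ρ'` of `ρ` to `Sat(L)`, and omitting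
one extension `ρ*` yields `I(ρ)` plus the single generator
`Σ_{u ∈ R} ρ*(u)⁻¹ x^u`, for any complete set `R ⊆ Sat(L)` of coset representatives
of `L` in `Sat(L)`. -/
theorem laurent_subintersection (n : ℕ) (k : Type*) [Field k] [IsAlgClosed k]
    (L : Submodule ℤ (Fin n → ℤ)) (ρ : ↥L → kˣ) (hρ : IsChar n k L ρ)
    (hchar : ringChar k = 0 ∨
      ¬ ringChar k ∣ Nat.card (↥(sat n L) ⧸ L.comap (sat n L).subtype)) :
    (∀ ρ' : ↥(sat n L) → kˣ, ExtendsChar n k L ρ ρ' →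
      (charIdeal n k (sat n L) ρ').IsPrime) ∧
    Finite {ρ' : ↥(sat n L) → kˣ // ExtendsChar n k L ρ ρ'} ∧
    (charIdeal n k L ρ =
      ⨅ ρ' : {ρ' : ↥(sat n L) → kˣ // ExtendsChar n k L ρ ρ'},
        charIdeal n k (sat n L) ρ'.val) ∧
    ∀ ρstar : ↥(sat n L) → kˣ, ExtendsChar n k L ρ ρstar →
      ∀ Rs : Finset (Fin n → ℤ), ∀ hRs : ∀ r ∈ Rs, r ∈ sat n L,
        (∀ v ∈ sat n L, ∃! r, r ∈ Rs ∧ v - r ∈ L) →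
        (⨅ ρ' : {ρ' : ↥(sat n L) → kˣ // ExtendsChar n k L ρ ρ' ∧ ρ' ≠ ρstar},
            charIdeal n k (sat n L) ρ'.val) =
          charIdeal n k L ρ + Ideal.span
            {∑ u ∈ Rs.attach,
              AddMonoidAlgebra.single (↑u : Fin n → ℤ)
                (((ρstar ⟨↑u, hRs ↑u u.2⟩)⁻¹ : kˣ) : k)} := by
  have := hasEnoughRootsOfUnity_exponent hchar
  exact laurent_subintersection_general n k L ρ (exists_extendsChar hρ)

end LaurentBinomial
end
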